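/- For all real constants α ∈ (0,2), β ∈ (2,3), δ > 0 and ε > 0, there exists n₀ such that for all n ≥ n₀ the following holds: for every M ≥ 1 and all Boolean functions h_1, …, h_k : {0,1}^M → {0,1} with k ≤ n^α and L(h_i) ≤ n^β for every i, with probability at least 1 − ε over a random restriction ρ ~ R_p on {0,1}^M with p = 2·ln(log₂ n)/n, every i satisfies L(h_i|_ρ) ≤ n^{β − 2 + δ}. -/

import Mathlib

/-- A De Morgan formula over variables indexed by `ι`: leaves are literals
(`b = true` for `x i`, `b = false` for `¬ x i`), internal gates are binary
AND/OR gates. -/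
inductive DMF (ι : Type) : Type
  | leaf (i : ι) (b : Bool) : DMF ι
  | and (φ ψ : DMF ι) : DMF ι
  | or (φ ψ : DMF ι) : DMF ι

namespace DMF

/-- Evaluation of a De Morgan formula on an assignment. -/
def eval {ι : Type} : DMF ι → (ι → Bool) → Bool
  | leaf i b, x => if b then x i else !(x i)
  | and φ ψ, x => φ.eval x && ψ.eval x
  | or φ ψ, x => φ.eval x || ψ.eval x

/-- The size of a formula is its number of leaves. -/
def size {ι : Type} : DMF ι → ℕ
  | leaf _ _ => 1
  | and φ ψ => φ.size + ψ.size
  | or φ ψ => φ.size + ψ.size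

/-- The depth of a formula: maximum number of edges on a root-to-leaf path. -/
def depth {ι : Type} : DMF ι → ℕ
  | leaf _ _ => 0
  | and φ ψ => max φ.depth ψ.depth + 1
  | or φ ψ => max φ.depth ψ.depth + 1

/-- `topAnd φ r` holds iff every gate of `φ` at distance less than `r` from the
root is an AND gate. -/
def topAnd {ι : Type} : DMF ι → ℝ → Prop
  | leaf _ _, _ => True
  | and φ ψ, r => φ.topAnd (r - 1) ∧ ψ.topAnd (r - 1)
  | or φ ψ, r => r ≤ 0 ∧ φ.topAnd (r - 1) ∧ ψ.topAnd (r - 1)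

end DMF

open Classical in
/-- Formula complexity `L(h)`: the minimum number of leaves of a De Morgan
formula computing `h`, with the convention `L(h) = 0` for constant `h`. -/
noncomputable def Lc {ι : Type} (h : (ι → Bool) → Bool) : ℕ :=
  if ∃ c, ∀ x, h x = c then 0
  else sInf {s | ∃ φ : DMF ι, φ.size = s ∧ ∀ x, φ.eval x = h x}


/-- The function obtained from `h` by applying the restriction
`ρ ∈ {0,1,*}^M` (encoded with `none = *`): fixed coordinates take the value
prescribed by `ρ`, free coordinates take the value of the input. -/
def restrict {M : ℕ} (h : (Fin M → Bool) → Bool) (ρ : Fin M → Option Bool) :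
    (Fin M → Bool) → Bool :=
  fun x => h (fun i => (ρ i).getD (x i))

/-- The probability of a single coordinate of the random restriction `R_p`:
`*` (i.e. `none`) has probability `p`, and each of `0` and `1` has
probability `(1-p)/2`. -/
noncomputable def rWeight (p : ℝ) : Option Bool → ℝ
  | none => p
  | some _ => (1 - p) / 2



/-- The `±1` encoding of a bit. -/
noncomputable def sg (b : Bool) : ℝ := if b then -1 else 1

/-- Walsh characters. -/
noncomputable def chi {M : ℕ} (S : Finset (Fin M)) (x : Fin M → Bool) : ℝ := ∏ i ∈ S, sg (x i)

lemma sg_sq (b : Bool) : sg b * sg b = 1 := by cases b <;> simp [sg]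

lemma chi_sq {M : ℕ} (S : Finset (Fin M)) (x : Fin M → Bool) : chi S x * chi S x = 1 := by
  unfold chi
  rw [← Finset.prod_mul_distrib]
  exact Finset.prod_eq_one (fun i _ => sg_sq _)

lemma chi_eq_univ {M : ℕ} (S : Finset (Fin M)) (x : Fin M → Bool) :
    chi S x = ∏ i, (if i ∈ S then sg (x i) else 1) := by
  unfold chi
  rw [Finset.prod_ite_mem, Finset.univ_inter]

lemma chi_mul {M : ℕ} (S T : Finset (Fin M)) (x : Fin M → Bool) :
    chi S x * chi T x = chi (symmDiff S T) x := by
  rw [chi_eq_univ, chi_eq_univ, chi_eq_univ, ← Finset.prod_mul_distrib]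
  refine Finset.prod_congr rfl (fun i _ => ?_)
  by_cases h1 : i ∈ S <;> by_cases h2 : i ∈ T <;> simp [Finset.mem_symmDiff, h1, h2, sg_sq]

lemma sum_chi_chi {M : ℕ} (x y : Fin M → Bool) :
    ∑ S : Finset (Fin M), chi S x * chi S y = if x = y then (2:ℝ) ^ M else 0 := by
  have h : ∑ S : Finset (Fin M), chi S x * chi S y = ∏ i, (1 + sg (x i) * sg (y i)) := by
    rw [Finset.prod_one_add, Finset.powerset_univ]
    refine Finset.sum_congr rfl (fun S _ => ?_)
    unfold chi
    rw [← Finset.prod_mul_distrib]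
  rw [h]
  split_ifs with hxy
  · subst hxy
    simp only [sg_sq]
    norm_num
  · obtain ⟨i, hi⟩ := Function.ne_iff.mp hxy
    refine Finset.prod_eq_zero (Finset.mem_univ i) ?_
    cases hx : x i <;> cases hy : y i <;> simp_all [sg]

lemma sum_chi {M : ℕ} (S : Finset (Fin M)) :
    ∑ x : Fin M → Bool, chi S x = if S = ∅ then (2:ℝ) ^ M else 0 := by
  have h : ∑ x : Fin M → Bool, chi S x
      = ∏ i : Fin M, ∑ b : Bool, (if i ∈ S then sg b else 1) := by
    rw [Finset.prod_univ_sum, Fintype.piFinset_univ]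
    exact Finset.sum_congr rfl (fun x _ => chi_eq_univ S x)
  rw [h]
  split_ifs with hS
  · subst hS; simp
  · obtain ⟨i, hi⟩ := Finset.nonempty_iff_ne_empty.mpr hS
    refine Finset.prod_eq_zero (Finset.mem_univ i) ?_
    simp [hi, sg]

lemma chi_orth {M : ℕ} (S T : Finset (Fin M)) :
    ∑ x : Fin M → Bool, chi S x * chi T x = if S = T then (2:ℝ) ^ M else 0 := by
  simp only [chi_mul, sum_chi]
  have : (symmDiff S T = ∅) ↔ S = T := by
    rw [← Finset.bot_eq_empty, symmDiff_eq_bot]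
  simp [this]

/-- Fourier coefficients. -/
noncomputable def fc {M : ℕ} (f : (Fin M → Bool) → ℝ) (S : Finset (Fin M)) : ℝ :=
  (∑ x, f x * chi S x) / 2 ^ M

lemma fc_inv {M : ℕ} (f : (Fin M → Bool) → ℝ) (x : Fin M → Bool) :
    f x = ∑ S, fc f S * chi S x := by
  have h : ∑ S, fc f S * chi S x = (∑ S, ∑ y, f y * (chi S y * chi S x)) / 2 ^ M := by
    rw [Finset.sum_div]
    refine Finset.sum_congr rfl (fun S _ => ?_)
    unfold fc
    rw [div_mul_eq_mul_div, Finset.sum_mul]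
    congr 1
    exact Finset.sum_congr rfl (fun y _ => by ring)
  rw [h, Finset.sum_comm]
  simp only [← Finset.mul_sum, sum_chi_chi]
  simp

lemma parseval {M : ℕ} (f : (Fin M → Bool) → ℝ) :
    ∑ S, fc f S ^ 2 = (∑ x, f x ^ 2) / 2 ^ M := by
  have h1 : ∀ x, f x ^ 2 = ∑ S, fc f S * (f x * chi S x) := by
    intro x
    rw [sq]
    nth_rewrite 2 [fc_inv f x]
    rw [Finset.mul_sum]
    exact Finset.sum_congr rfl (fun y _ => by ring)
  simp only [h1]
  rw [Finset.sum_comm, Finset.sum_div]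
  refine Finset.sum_congr rfl (fun S _ => ?_)
  rw [← Finset.mul_sum, mul_div_assoc, sq]
  rfl

/-- Functions of Fourier degree at most `D`. -/
noncomputable def LD (M D : ℕ) : Submodule ℝ ((Fin M → Bool) → ℝ) :=
  Submodule.span ℝ {f | ∃ S : Finset (Fin M), S.card ≤ D ∧ f = chi S}

lemma LD_mono {M a b : ℕ} (h : a ≤ b) : LD M a ≤ LD M b := by
  refine Submodule.span_mono ?_
  rintro f ⟨S, hS, rfl⟩
  exact ⟨S, hS.trans h, rfl⟩

lemma chi_mem_LD {M D : ℕ} (S : Finset (Fin M)) (h : S.card ≤ D) : chi S ∈ LD M D :=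
  Submodule.subset_span ⟨S, h, rfl⟩

lemma one_mem_LD {M D : ℕ} : (1 : (Fin M → Bool) → ℝ) ∈ LD M D := by
  have : (1 : (Fin M → Bool) → ℝ) = chi ∅ := by ext x; simp [chi]
  rw [this]; exact chi_mem_LD _ (by simp)

lemma LD_mul {M a b : ℕ} {f g : (Fin M → Bool) → ℝ} (hf : f ∈ LD M a) (hg : g ∈ LD M b) :
    f * g ∈ LD M (a + b) := by
  induction hf using Submodule.span_induction with
  | zero => simp
  | add x y _ _ hx hy => rw [add_mul]; exact Submodule.add_mem _ hx hy
  | smul c x _ hx => rw [smul_mul_assoc]; exact Submodule.smul_mem _ _ hx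
  | mem x hx =>
    obtain ⟨S, hS, rfl⟩ := hx
    induction hg using Submodule.span_induction with
    | zero => simp
    | add x y _ _ hx hy => rw [mul_add]; exact Submodule.add_mem _ hx hy
    | smul c x _ hx => rw [mul_smul_comm]; exact Submodule.smul_mem _ _ hx
    | mem x hx =>
      obtain ⟨T, hT, rfl⟩ := hx
      have : (chi S * chi T : (Fin M → Bool) → ℝ) = chi (symmDiff S T) := by
        ext x; simp [chi_mul]
      rw [this]
      refine chi_mem_LD _ ?_
      calc (symmDiff S T).card ≤ (S ∪ T).card := Finset.card_le_card (by
            intro i; simp [Finset.mem_symmDiff]; tauto)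
        _ ≤ S.card + T.card := Finset.card_union_le _ _
        _ ≤ a + b := by omega

lemma LD_pow {M a : ℕ} {f : (Fin M → Bool) → ℝ} (hf : f ∈ LD M a) (n : ℕ) :
    f ^ n ∈ LD M (n * a) := by
  induction n with
  | zero => simpa using one_mem_LD
  | succ n ih => rw [pow_succ, Nat.succ_mul]; exact LD_mul ih hf

lemma fc_sub {M : ℕ} (f g : (Fin M → Bool) → ℝ) (S : Finset (Fin M)) :
    fc (f - g) S = fc f S - fc g S := by
  unfold fc
  simp only [Pi.sub_apply, sub_mul, Finset.sum_sub_distrib, sub_div]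

lemma fc_LD {M D : ℕ} {f : (Fin M → Bool) → ℝ} (hf : f ∈ LD M D) (S : Finset (Fin M))
    (hS : D < S.card) : fc f S = 0 := by
  induction hf using Submodule.span_induction with
  | zero => simp [fc]
  | add x y _ _ hx hy =>
    have : fc (x + y) S = fc x S + fc y S := by
      unfold fc
      simp only [Pi.add_apply, add_mul, Finset.sum_add_distrib, add_div]
    rw [this, hx, hy, add_zero]
  | smul c x _ hx =>
    have : fc (c • x) S = c * fc x S := by
      unfold fc
      simp only [Pi.smul_apply, smul_eq_mul, mul_assoc, ← Finset.mul_sum, mul_div_assoc]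
    rw [this, hx, mul_zero]
  | mem x hx =>
    obtain ⟨T, hT, rfl⟩ := hx
    unfold fc
    rw [chi_orth, if_neg, zero_div]
    rintro rfl
    omega

/-- If `f` is uniformly `e`-approximated in degree `D`, its Fourier tail is small. -/
lemma tail_of_approx {M D : ℕ} (f p : (Fin M → Bool) → ℝ) (e : ℝ) (hp : p ∈ LD M D)
    (h : ∀ x, |f x - p x| ≤ e) :
    ∑ S with D < S.card, fc f S ^ 2 ≤ e ^ 2 := by
  calc ∑ S with D < S.card, fc f S ^ 2 = ∑ S with D < S.card, fc (f - p) S ^ 2 := by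
        refine Finset.sum_congr rfl (fun S hS => ?_)
        rw [fc_sub, fc_LD hp S (by simpa using hS), sub_zero]
    _ ≤ ∑ S, fc (f - p) S ^ 2 :=
        Finset.sum_le_sum_of_subset_of_nonneg (Finset.filter_subset _ _)
          (fun _ _ _ => sq_nonneg _)
    _ = (∑ x, (f - p) x ^ 2) / 2 ^ M := parseval _
    _ ≤ e ^ 2 := by
        rw [div_le_iff₀ (by positivity)]
        calc ∑ x, (f - p) x ^ 2 ≤ ∑ _x : Fin M → Bool, e ^ 2 :=
              Finset.sum_le_sum (fun x _ => sq_le_sq' (abs_le.mp (h x)).1 (abs_le.mp (h x)).2)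
          _ = e ^ 2 * 2 ^ M := by simp [mul_comm]


section Flag
variable {E : Type} [NormedAddCommGroup E] [InnerProductSpace ℝ E] [FiniteDimensional ℝ E]

/-- Successive differences of the orthogonal projections along a flag. -/
noncomputable def flagD (K : ℕ → Submodule ℝ E) : ℕ → E → E
  | 0, a => (K 0).starProjection a
  | (j+1), a => (K (j+1)).starProjection a - (K j).starProjection a

lemma flagD_succ_orth (K : ℕ → Submodule ℝ E) (hK : Monotone K) (j : ℕ) (a w : E)
    (hw : w ∈ K j) : inner ℝ (flagD K (j+1) a) w = 0 := by
  have h1 := Submodule.starProjection_inner_eq_zero (K := K (j+1)) a w (hK (Nat.le_succ j) hw)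
  have h2 := Submodule.starProjection_inner_eq_zero (K := K j) a w hw
  rw [inner_sub_left] at h1 h2
  simp only [flagD, inner_sub_left]
  linarith

lemma flagD_sum (K : ℕ → Submodule ℝ E) (hK : Monotone K) (n : ℕ) (a : E) :
    ∑ j ∈ Finset.range (n+1), ‖flagD K j a‖ ^ 2 = ‖(K n).starProjection a‖ ^ 2 := by
  induction n with
  | zero => simp [flagD]
  | succ n ih =>
    rw [Finset.sum_range_succ, ih]
    have h : (K (n+1)).starProjection a = flagD K (n+1) a + (K n).starProjection a := by
      simp [flagD]
    rw [h]
    have h0 := flagD_succ_orth K hK n a _ ((K n).starProjection_apply_mem a)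
    have := norm_add_sq_eq_norm_sq_add_norm_sq_of_inner_eq_zero _ _ h0
    rw [sq, sq, sq, this]; ring

lemma flagD_sum_le (K : ℕ → Submodule ℝ E) (hK : Monotone K) (n : ℕ) (a : E) :
    ∑ j ∈ Finset.range (n+1), ‖flagD K j a‖ ^ 2 ≤ ‖a‖ ^ 2 := by
  rw [flagD_sum K hK]
  have := (K n).norm_starProjection_apply_le a
  gcongr

lemma flagD_cs (K : ℕ → Submodule ℝ E) (hK : Monotone K) (n : ℕ) (a b : E) :
    ∑ j ∈ Finset.range n, ‖flagD K (j+1) a‖ * ‖flagD K j b‖ ≤ ‖a‖ * ‖b‖ := by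
  have h1 : ∑ j ∈ Finset.range n, ‖flagD K (j+1) a‖ ^ 2 ≤ ‖a‖ ^ 2 := by
    refine le_trans ?_ (flagD_sum_le K hK n a)
    rw [Finset.sum_range_succ']
    exact le_add_of_nonneg_right (sq_nonneg _)
  have h2 : ∑ j ∈ Finset.range n, ‖flagD K j b‖ ^ 2 ≤ ‖b‖ ^ 2 := by
    refine le_trans ?_ (flagD_sum_le K hK n b)
    rw [Finset.sum_range_succ]
    exact le_add_of_nonneg_right (sq_nonneg _)
  refine le_trans (Real.sum_mul_le_sqrt_mul_sqrt _ _ _) ?_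
  refine mul_le_mul (Real.sqrt_le_iff.mpr ⟨norm_nonneg _, h1⟩)
    (Real.sqrt_le_iff.mpr ⟨norm_nonneg _, h2⟩) (Real.sqrt_nonneg _) (norm_nonneg _)

lemma flag_bound (K : ℕ → Submodule ℝ E) (hK : Monotone K) (e : E →ₗ[ℝ] E)
    (hsym : ∀ a b, inner ℝ (e a) b = inner ℝ a (e b)) (hnorm : ∀ a, ‖e a‖ ≤ ‖a‖)
    (hstep : ∀ j, ∀ a ∈ K j, e a ∈ K (j+1)) (n : ℕ) (a b : E) (ha : e a = a) (hb : e b = 0) :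
    |∑ j ∈ Finset.range n, inner ℝ a ((K j).starProjection b)| ≤ 2 * (‖a‖ * ‖b‖) := by
  have key : ∀ (a b : E) (j : ℕ),
      |inner ℝ (flagD K (j+1) a) (e ((K j).starProjection b))|
        ≤ ‖flagD K (j+1) a‖ * ‖flagD K j b‖ := by
    intro a b j
    have h : inner ℝ (flagD K (j+1) a) (e ((K j).starProjection b))
        = inner ℝ (flagD K (j+1) a) (e (flagD K j b)) := by
      cases j with
      | zero => rfl
      | succ j =>
        have h2 : flagD K (j+1) b = (K (j+1)).starProjection b - (K j).starProjection b := rfl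
        rw [h2, map_sub, inner_sub_right,
          flagD_succ_orth K hK (j+1) a _ (hstep j _ ((K j).starProjection_apply_mem b)), sub_zero]
    rw [h]
    exact (abs_real_inner_le_norm _ _).trans
      (mul_le_mul_of_nonneg_left (hnorm _) (norm_nonneg _))
  have split : ∀ (a w : E) (j : ℕ), w ∈ K (j+1) →
      inner ℝ a w = inner ℝ (flagD K (j+1) a) w + inner ℝ ((K j).starProjection a) w := by
    intro a w j hw
    have h1 := Submodule.starProjection_inner_eq_zero (K := K (j+1)) a w hw
    rw [inner_sub_left] at h1
    simp only [flagD, inner_sub_left]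
    linarith
  have term : ∀ j, inner ℝ a ((K j).starProjection b)
      = inner ℝ (flagD K (j+1) a) (e ((K j).starProjection b))
        - inner ℝ (flagD K (j+1) b) (e ((K j).starProjection a)) := by
    intro j
    have ma := hstep j _ ((K j).starProjection_apply_mem a)
    have mb := hstep j _ ((K j).starProjection_apply_mem b)
    have h1 := split a _ j mb
    have h2 := split b _ j ma
    have h3 : inner ℝ a ((K j).starProjection b) = inner ℝ a (e ((K j).starProjection b)) := by
      conv_lhs => rw [← ha]
      rw [hsym]
    have h4 : inner ℝ b (e ((K j).starProjection a)) = 0 := by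
      rw [← hsym, hb, inner_zero_left]
    have h5 : inner ℝ ((K j).starProjection a) (e ((K j).starProjection b))
        = inner ℝ ((K j).starProjection b) (e ((K j).starProjection a)) := by
      rw [← hsym, real_inner_comm]
    linarith
  calc |∑ j ∈ Finset.range n, inner ℝ a ((K j).starProjection b)|
      ≤ ∑ j ∈ Finset.range n, |inner ℝ a ((K j).starProjection b)| :=
        Finset.abs_sum_le_sum_abs _ _
    _ ≤ ∑ j ∈ Finset.range n, (‖flagD K (j+1) a‖ * ‖flagD K j b‖
          + ‖flagD K (j+1) b‖ * ‖flagD K j a‖) := by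
        refine Finset.sum_le_sum (fun j _ => ?_)
        rw [term j]
        exact (abs_sub _ _).trans (add_le_add (key a b j) (key b a j))
    _ ≤ ‖a‖ * ‖b‖ + ‖b‖ * ‖a‖ := by
        rw [Finset.sum_add_distrib]
        exact add_le_add (flagD_cs K hK n a b) (flagD_cs K hK n b a)
    _ = 2 * (‖a‖ * ‖b‖) := by ring

end Flag

/-- Multiplication operator on `ℓ²` of the cube. -/
noncomputable def mulOp {M : ℕ} (g : (Fin M → Bool) → ℝ) :
    EuclideanSpace ℝ (Fin M → Bool) →ₗ[ℝ] EuclideanSpace ℝ (Fin M → Bool) where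
  toFun u := WithLp.toLp 2 (fun x => g x * u x)
  map_add' u v := by ext x; simp [mul_add]
  map_smul' c u := by ext x; simp; ring

@[simp] lemma mulOp_apply {M : ℕ} (g : (Fin M → Bool) → ℝ)
    (u : EuclideanSpace ℝ (Fin M → Bool)) (x : Fin M → Bool) : mulOp g u x = g x * u x := rfl

lemma mulOp_norm {M : ℕ} (g : (Fin M → Bool) → ℝ) (hg : ∀ x, |g x| ≤ 1)
    (u : EuclideanSpace ℝ (Fin M → Bool)) : ‖mulOp g u‖ ≤ ‖u‖ := by
  rw [EuclideanSpace.norm_eq, EuclideanSpace.norm_eq]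
  refine Real.sqrt_le_sqrt (Finset.sum_le_sum (fun x _ => ?_))
  rw [mulOp_apply, norm_mul]
  have : ‖g x‖ * ‖u x‖ ≤ ‖u x‖ := mul_le_of_le_one_left (norm_nonneg _) (hg x)
  gcongr

lemma inner_eq_sum {M : ℕ} (u v : EuclideanSpace ℝ (Fin M → Bool)) :
    inner ℝ u v = ∑ x, u x * v x := by
  rw [PiLp.inner_apply]
  exact Finset.sum_congr rfl (fun x _ => by simp [mul_comm])

lemma mulOp_sym {M : ℕ} (g : (Fin M → Bool) → ℝ)
    (u v : EuclideanSpace ℝ (Fin M → Bool)) :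
    inner ℝ (mulOp g u) v = inner ℝ u (mulOp g v) := by
  simp only [inner_eq_sum, mulOp_apply]
  exact Finset.sum_congr rfl (fun x _ => by ring)

/-- Real indicator of a Boolean function. -/
noncomputable def ind {M : ℕ} (f : (Fin M → Bool) → Bool) (x : Fin M → Bool) : ℝ :=
  if f x then 1 else 0

lemma ind_abs {M : ℕ} (f : (Fin M → Bool) → Bool) (x : Fin M → Bool) : |ind f x| ≤ 1 := by
  unfold ind; split_ifs <;> simp

lemma ind_leaf_mem {M : ℕ} (i : Fin M) (b : Bool) : ind (DMF.leaf i b).eval ∈ LD M 1 := by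
  have h1 : chi {i} ∈ LD M 1 := chi_mem_LD _ (by simp)
  have h2 : (1 : (Fin M → Bool) → ℝ) ∈ LD M 1 := one_mem_LD
  cases b
  · have : ind (DMF.leaf i false).eval = (1/2 : ℝ) • (1 + chi {i}) := by
      ext x; cases hx : x i <;> simp [ind, DMF.eval, chi, sg, hx] <;> norm_num
    rw [this]
    exact Submodule.smul_mem _ _ (Submodule.add_mem _ h2 h1)
  · have : ind (DMF.leaf i true).eval = (1/2 : ℝ) • (1 - chi {i}) := by
      ext x; cases hx : x i <;> simp [ind, DMF.eval, chi, sg, hx] <;> norm_num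
    rw [this]
    exact Submodule.smul_mem _ _ (Submodule.sub_mem _ h2 h1)

lemma cs_two (s t a b : ℝ) (hs : 0 ≤ s) (ht : 0 ≤ t) :
    √s * a + √t * b ≤ √(s + t) * √(a^2 + b^2) := by
  rw [← Real.sqrt_mul (by positivity)]
  apply Real.le_sqrt_of_sq_le
  have h1 := Real.sq_sqrt hs
  have h2 := Real.sq_sqrt ht
  nlinarith [sq_nonneg (√s * b - √t * a)]

lemma split_norm {M : ℕ} (f : (Fin M → Bool) → Bool)
    (u : EuclideanSpace ℝ (Fin M → Bool)) :
    ‖mulOp (ind f) u‖ ^ 2 + ‖u - mulOp (ind f) u‖ ^ 2 = ‖u‖ ^ 2 := by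
  rw [EuclideanSpace.norm_sq_eq, EuclideanSpace.norm_sq_eq, EuclideanSpace.norm_sq_eq,
    ← Finset.sum_add_distrib]
  refine Finset.sum_congr rfl (fun x _ => ?_)
  rw [PiLp.sub_apply, mulOp_apply]
  unfold ind
  split_ifs <;> simp

/-- The rectangle (adversary) bound. -/
lemma rect_bound {M : ℕ} (T : EuclideanSpace ℝ (Fin M → Bool) →ₗ[ℝ] EuclideanSpace ℝ (Fin M → Bool))
    (c : ℝ) (hc : 0 ≤ c)
    (hleaf : ∀ (i : Fin M) (b : Bool) (u w : EuclideanSpace ℝ (Fin M → Bool)),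
      (∀ x, (DMF.leaf i b).eval x = false → u x = 0) →
      (∀ x, (DMF.leaf i b).eval x = true → w x = 0) → |inner ℝ u (T w)| ≤ c * (‖u‖ * ‖w‖))
    (φ : DMF (Fin M)) : ∀ (u w : EuclideanSpace ℝ (Fin M → Bool)),
      (∀ x, φ.eval x = false → u x = 0) →
      (∀ x, φ.eval x = true → w x = 0) →
      |inner ℝ u (T w)| ≤ c * √(φ.size) * (‖u‖ * ‖w‖) := by
  induction φ with
  | leaf i b =>
    intro u w hu hw
    simpa [DMF.size] using hleaf i b u w hu hw
  | and φ ψ h1 h2 =>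
    intro u w hu hw
    set w2 := mulOp (ind φ.eval) w with hw2
    set w1 := w - w2 with hw1
    have e1 := h1 u w1 (fun x hx => hu x (by simp [DMF.eval, hx]))
      (fun x hx => by simp [hw1, hw2, ind, hx])
    have e2 := h2 u w2 (fun x hx => hu x (by simp [DMF.eval, hx]))
      (fun x hx => by
        rw [hw2, mulOp_apply]
        unfold ind
        split_ifs with h
        · rw [hw x (by simp [DMF.eval, hx, h])]; simp
        · simp)
    have hn := split_norm φ.eval w
    rw [← hw2, ← hw1] at hn
    have hsum : w = w1 + w2 := by simp [hw1]
    have hcs := cs_two φ.size ψ.size ‖w1‖ ‖w2‖ (by positivity) (by positivity)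
    have hsq : √(‖w1‖^2 + ‖w2‖^2) = ‖w‖ := by
      rw [add_comm, hn, Real.sqrt_sq (norm_nonneg _)]
    rw [hsq] at hcs
    calc |inner ℝ u (T w)| = |inner ℝ u (T w1) + inner ℝ u (T w2)| := by
          rw [← inner_add_right, ← map_add, ← hsum]
      _ ≤ c * √φ.size * (‖u‖ * ‖w1‖) + c * √ψ.size * (‖u‖ * ‖w2‖) :=
          (abs_add_le _ _).trans (add_le_add e1 e2)
      _ = c * ‖u‖ * (√φ.size * ‖w1‖ + √ψ.size * ‖w2‖) := by ring
      _ ≤ c * ‖u‖ * (√(φ.size + ψ.size) * ‖w‖) :=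
          mul_le_mul_of_nonneg_left hcs (by positivity)
      _ = _ := by simp only [DMF.size]; push_cast; ring
  | or φ ψ h1 h2 =>
    intro u w hu hw
    set u1 := mulOp (ind φ.eval) u with hu1
    set u2 := u - u1 with hu2
    have e1 := h1 u1 w (fun x hx => by simp [hu1, ind, hx])
      (fun x hx => hw x (by simp [DMF.eval, hx]))
    have e2 := h2 u2 w
      (fun x hx => by
        rw [hu2, PiLp.sub_apply, hu1, mulOp_apply]
        unfold ind
        split_ifs with h
        · simp
        · rw [hu x (by simp [DMF.eval, hx, h])]; simp)
      (fun x hx => hw x (by simp [DMF.eval, hx]))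
    have hn := split_norm φ.eval u
    rw [← hu1, ← hu2] at hn
    have hsum : u = u1 + u2 := by simp [hu2]
    have hcs := cs_two φ.size ψ.size ‖u1‖ ‖u2‖ (by positivity) (by positivity)
    have hsq : √(‖u1‖^2 + ‖u2‖^2) = ‖u‖ := by
      rw [hn, Real.sqrt_sq (norm_nonneg _)]
    rw [hsq] at hcs
    calc |inner ℝ u (T w)| = |inner ℝ u1 (T w) + inner ℝ u2 (T w)| := by
          rw [← inner_add_left, ← hsum]
      _ ≤ c * √φ.size * (‖u1‖ * ‖w‖) + c * √ψ.size * (‖u2‖ * ‖w‖) :=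
          (abs_add_le _ _).trans (add_le_add e1 e2)
      _ = c * ‖w‖ * (√φ.size * ‖u1‖ + √ψ.size * ‖u2‖) := by ring
      _ ≤ c * ‖w‖ * (√(φ.size + ψ.size) * ‖u‖) :=
          mul_le_mul_of_nonneg_left hcs (by positivity)
      _ = _ := by simp only [DMF.size]; push_cast; ring


/-- Duality for uniform approximation by low degree functions. -/
lemma dual_exists {M D : ℕ} (f : (Fin M → Bool) → ℝ) (e : ℝ)
    (h : ¬ ∃ p ∈ LD M D, ∀ x, |f x - p x| ≤ e) :
    ∃ ψ : (Fin M → Bool) → ℝ, ∑ x, |ψ x| ≤ 1 ∧ (∀ p ∈ LD M D, ∑ x, ψ x * p x = 0) ∧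
      e ≤ ∑ x, ψ x * f x := by
  obtain ⟨g, hg1, hg2⟩ := exists_dual_vector'' ℝ ((LD M D).mkQ f)
  have hnorm : ∀ h : (Fin M → Bool) → ℝ, ‖(LD M D).mkQ h‖ ≤ ‖h‖ := fun h =>
    Submodule.Quotient.norm_mk_le (LD M D) h
  let G : ((Fin M → Bool) → ℝ) →ₗ[ℝ] ℝ := g.toLinearMap.comp (LD M D).mkQ
  have hG : ∀ h : (Fin M → Bool) → ℝ, G h = ∑ x, G (Pi.single x 1) * h x := by
    intro h
    conv_lhs => rw [← Finset.univ_sum_single h]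
    rw [map_sum]
    refine Finset.sum_congr rfl (fun x _ => ?_)
    have : (Pi.single x (h x) : (Fin M → Bool) → ℝ) = h x • Pi.single x 1 := by
      rw [← Pi.single_smul]; simp
    rw [this, map_smul, smul_eq_mul, mul_comm]
  refine ⟨fun x => G (Pi.single x 1), ?_, ?_, ?_⟩
  · let σ : (Fin M → Bool) → ℝ := fun x => if 0 ≤ G (Pi.single x 1) then 1 else -1
    have h1 : ∑ x, |G (Pi.single x 1)| = G σ := by
      rw [hG σ]
      refine Finset.sum_congr rfl (fun x _ => ?_)
      by_cases hx : 0 ≤ G (Pi.single x 1)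
      · simp [σ, hx, abs_of_nonneg]
      · simp [σ, hx, abs_of_neg (not_le.mp hx)]
    rw [h1]
    have hσ : ‖σ‖ ≤ 1 := by
      rw [pi_norm_le_iff_of_nonneg zero_le_one]
      intro x
      simp only [σ]; split_ifs <;> simp
    calc G σ ≤ ‖g ((LD M D).mkQ σ)‖ := le_trans (le_abs_self _) (le_of_eq rfl)
      _ ≤ ‖g‖ * ‖(LD M D).mkQ σ‖ := g.le_opNorm _
      _ ≤ 1 * 1 := mul_le_mul hg1 ((hnorm σ).trans hσ) (norm_nonneg _) zero_le_one
      _ = 1 := one_mul 1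
  · intro p hp
    rw [← hG p]
    have : (LD M D).mkQ p = 0 := by simpa using hp
    simp [G, this]
  · rw [← hG f]
    have h2 : G f = ‖(LD M D).mkQ f‖ := by simpa [G] using hg2
    rw [h2]
    by_contra hlt
    push Not at hlt
    apply h
    obtain ⟨m, hm, hm2⟩ := Submodule.Quotient.norm_mk_lt ((LD M D).mkQ f) (sub_pos.mpr hlt)
    refine ⟨f - m, ?_, fun x => ?_⟩
    · have : (LD M D).mkQ f = (LD M D).mkQ m := hm.symm
      have h3 : (LD M D).mkQ (f - m) = 0 := by rw [map_sub, this, sub_self]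
      exact (Submodule.Quotient.mk_eq_zero _).mp h3
    · have h4 := norm_le_pi_norm m x
      rw [Real.norm_eq_abs] at h4
      simp only [Pi.sub_apply, sub_sub_cancel]
      linarith

/-- Approximate degree of De Morgan formulas is `O(√size)`. -/
lemma approx_degree {M D : ℕ} (φ : DMF (Fin M)) (e : ℝ) (he : 0 < e)
    (hD : 4 * √(φ.size) < (D + 1) * e) :
    ∃ p ∈ LD M D, ∀ x, |ind φ.eval x - p x| ≤ e := by
  by_contra hcon
  obtain ⟨ψ, hψ1, hψ2, hψ3⟩ := dual_exists _ _ hcon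
  let v : EuclideanSpace ℝ (Fin M → Bool) := WithLp.toLp 2 (fun x => √|ψ x|)
  let u : EuclideanSpace ℝ (Fin M → Bool) :=
    WithLp.toLp 2 (fun x => (if 0 ≤ ψ x then 1 else -1) * √|ψ x|)
  have hv : ∀ x, v x = √|ψ x| := fun _ => rfl
  have hu : ∀ x, u x = (if 0 ≤ ψ x then 1 else -1) * √|ψ x| := fun _ => rfl
  have huv : ∀ x, u x * v x = ψ x := by
    intro x
    rw [hu, hv, mul_assoc, Real.mul_self_sqrt (abs_nonneg _)]
    split_ifs with h
    · rw [abs_of_nonneg h, one_mul]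
    · rw [abs_of_neg (not_le.mp h)]; ring
  have hvn : ‖v‖ ≤ 1 := by
    rw [EuclideanSpace.norm_eq, Real.sqrt_le_iff]
    refine ⟨zero_le_one, ?_⟩
    rw [one_pow]
    refine le_trans (le_of_eq ?_) hψ1
    refine Finset.sum_congr rfl (fun x _ => ?_)
    rw [hv, Real.norm_eq_abs, sq_abs, Real.sq_sqrt (abs_nonneg _)]
  have hun : ‖u‖ ≤ 1 := by
    rw [EuclideanSpace.norm_eq, Real.sqrt_le_iff]
    refine ⟨zero_le_one, ?_⟩
    rw [one_pow]
    refine le_trans (le_of_eq ?_) hψ1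
    refine Finset.sum_congr rfl (fun x _ => ?_)
    rw [hu, Real.norm_eq_abs, sq_abs, mul_pow, Real.sq_sqrt (abs_nonneg _)]
    split_ifs <;> simp
  -- the flag
  let μ : ((Fin M → Bool) → ℝ) →ₗ[ℝ] EuclideanSpace ℝ (Fin M → Bool) :=
    { toFun := fun p => WithLp.toLp 2 (fun x => p x * v x)
      map_add' := fun p q => by ext x; simp [add_mul]
      map_smul' := fun c p => by ext x; simp [mul_assoc] }
  have hμ : ∀ p x, μ p x = p x * v x := fun _ _ => rfl
  let K : ℕ → Submodule ℝ (EuclideanSpace ℝ (Fin M → Bool)) := fun j => (LD M j).map μ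
  have hK : Monotone K := fun a b hab => Submodule.map_mono (LD_mono hab)
  have hstep : ∀ g ∈ LD M 1, ∀ j, ∀ a ∈ K j, mulOp g a ∈ K (j+1) := by
    rintro g hg j a ⟨p, hp, rfl⟩
    refine ⟨g * p, ?_, ?_⟩
    · rw [add_comm]; exact LD_mul hg hp
    · ext x; simp [hμ, mul_assoc]
  let T : EuclideanSpace ℝ (Fin M → Bool) →ₗ[ℝ] EuclideanSpace ℝ (Fin M → Bool) :=
    ∑ j ∈ Finset.range (D+1), (K j).starProjection.toLinearMap
  have hT : ∀ w, T w = ∑ j ∈ Finset.range (D+1), (K j).starProjection w := by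
    intro w; simp [T]
  have hTsym : ∀ a b, inner ℝ (T a) b = inner ℝ a (T b) := by
    intro a b
    rw [hT, hT, sum_inner, inner_sum]
    exact Finset.sum_congr rfl (fun j _ => (K j).inner_starProjection_left_eq_right a b)
  have hTv : T v = ((D:ℝ) + 1) • v := by
    rw [hT]
    have : ∀ j ∈ Finset.range (D+1), (K j).starProjection v = v := by
      intro j _
      rw [Submodule.starProjection_eq_self_iff]
      exact ⟨1, one_mem_LD, by ext x; simp [hμ]⟩
    rw [Finset.sum_congr rfl this]
    simp [← Nat.cast_smul_eq_nsmul ℝ]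
  have hTu : T u = 0 := by
    rw [hT]
    refine Finset.sum_eq_zero (fun j hj => ?_)
    rw [Submodule.starProjection_apply_eq_zero_iff, Submodule.mem_orthogonal]
    rintro w ⟨p, hp, rfl⟩
    have hp' : p ∈ LD M D := LD_mono (by simp at hj; omega) hp
    rw [inner_eq_sum, ← hψ2 p hp']
    refine Finset.sum_congr rfl (fun x _ => ?_)
    rw [hμ, ← huv]; ring
  have hleaf : ∀ (i : Fin M) (b : Bool) (u w : EuclideanSpace ℝ (Fin M → Bool)),
      (∀ x, (DMF.leaf i b).eval x = false → u x = 0) →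
      (∀ x, (DMF.leaf i b).eval x = true → w x = 0) → |inner ℝ u (T w)| ≤ 2 * (‖u‖ * ‖w‖) := by
    intro i b u w hu hw
    rw [hT, inner_sum]
    refine flag_bound K hK (mulOp (ind (DMF.leaf i b).eval)) (mulOp_sym _)
      (mulOp_norm _ (ind_abs _)) (hstep _ (ind_leaf_mem i b)) (D+1) u w ?_ ?_
    · ext x
      rw [mulOp_apply]
      unfold ind
      split_ifs with h
      · simp
      · rw [hu x (by simpa using h)]; simp
    · ext x
      rw [mulOp_apply]
      unfold ind
      split_ifs with h
      · rw [hw x h]; simp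
      · simp
  have hrect := rect_bound T 2 (by norm_num) hleaf φ
  set f := ind φ.eval with hf
  have hbnd : ∀ a b : EuclideanSpace ℝ (Fin M → Bool), ‖a‖ ≤ 1 → ‖b‖ ≤ 1 →
      |inner ℝ (mulOp f a) (T (b - mulOp f b))| ≤ 2 * √φ.size := by
    intro a b ha hb
    have h1 := hrect (mulOp f a) (b - mulOp f b)
      (fun x hx => by simp [hf, ind, hx]) (fun x hx => by simp [hf, ind, hx])
    have h2 : ‖mulOp f a‖ ≤ 1 := (mulOp_norm f (ind_abs _) a).trans ha
    have h3 : ‖b - mulOp f b‖ ≤ 1 := by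
      have := split_norm φ.eval b
      rw [← hf] at this
      refine le_trans ?_ hb
      refine le_of_sq_le_sq ?_ (norm_nonneg _)
      nlinarith [sq_nonneg ‖mulOp f b‖]
    refine h1.trans ?_
    have : ‖mulOp f a‖ * ‖b - mulOp f b‖ ≤ 1 := mul_le_one₀ h2 (norm_nonneg _) h3
    exact mul_le_of_le_one_right (by positivity) this
  have e1 : inner ℝ (mulOp f u) (T v) = ((D:ℝ)+1) * ∑ x, ψ x * f x := by
    rw [hTv, inner_smul_right, inner_eq_sum]
    congr 1
    refine Finset.sum_congr rfl (fun x _ => ?_)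
    rw [mulOp_apply, ← huv]; ring
  have e2 : inner ℝ (mulOp f u) (T v) = inner ℝ (mulOp f u) (T (v - mulOp f v))
      - inner ℝ (mulOp f v) (T (u - mulOp f u)) := by
    have h1 : inner ℝ (mulOp f v) (T (u - mulOp f u)) = - inner ℝ (mulOp f u) (T (mulOp f v)) := by
      rw [map_sub, hTu, zero_sub, inner_neg_right, ← hTsym, real_inner_comm]
    rw [h1, map_sub, inner_sub_right]; ring
  have b1 := hbnd u v hun hvn
  have b2 := hbnd v u hvn hun
  have b3 := (abs_le.mp b1).2
  have b4 := (abs_le.mp b2).1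
  have : ((D:ℝ)+1) * e ≤ ((D:ℝ)+1) * ∑ x, ψ x * f x :=
    mul_le_mul_of_nonneg_left hψ3 (by positivity)
  linarith


/-- The majority amplification polynomial. -/
noncomputable def majP (t : ℕ) (y : ℝ) : ℝ :=
  ∑ j ∈ Finset.range (2*t+2) with t < j, y ^ j * (1 - y) ^ (2*t+1-j) * ((2*t+1).choose j : ℝ)

lemma maj_aux (t : ℕ) (y : ℝ) :
    majP t y + ∑ j ∈ Finset.range (2*t+2) with ¬ t < j,
      y ^ j * (1 - y) ^ (2*t+1-j) * ((2*t+1).choose j : ℝ) = 1 := by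
  unfold majP
  rw [Finset.sum_filter_add_sum_filter_not, ← add_pow]
  simp

lemma choose_sum_le (t : ℕ) (s : Finset ℕ) (hs : s ⊆ Finset.range (2*t+2)) :
    ∑ j ∈ s, ((2*t+1).choose j : ℝ) ≤ 2 * 4 ^ t := by
  calc ∑ j ∈ s, ((2*t+1).choose j : ℝ) ≤ ∑ j ∈ Finset.range (2*t+2), ((2*t+1).choose j : ℝ) :=
        Finset.sum_le_sum_of_subset_of_nonneg hs (fun _ _ _ => by positivity)
    _ = 2 ^ (2*t+1) := by
        have := Nat.sum_range_choose (2*t+1)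
        exact_mod_cast this
    _ = 2 * 4 ^ t := by rw [pow_succ, pow_mul]; norm_num; ring

lemma majP_nonneg (t : ℕ) (y : ℝ) (h0 : 0 ≤ y) (h1 : y ≤ 1) : 0 ≤ majP t y := by
  have : 0 ≤ 1 - y := by linarith
  exact Finset.sum_nonneg (fun _ _ => by positivity)

lemma majP_small (t : ℕ) (y : ℝ) (h0 : 0 ≤ y) (h1 : y ≤ 1/64) :
    |majP t y| ≤ 2 * (1/16) ^ t := by
  have h2 : 0 ≤ 1 - y := by linarith
  rw [abs_of_nonneg (majP_nonneg t y h0 (by linarith))]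
  unfold majP
  calc _ ≤ ∑ j ∈ Finset.range (2*t+2) with t < j, (1/64:ℝ)^t * ((2*t+1).choose j : ℝ) := by
        refine Finset.sum_le_sum (fun j hj => ?_)
        simp only [Finset.mem_filter] at hj
        refine mul_le_mul_of_nonneg_right ?_ (by positivity)
        calc y ^ j * (1 - y) ^ (2*t+1-j) ≤ y ^ t * 1 :=
              mul_le_mul (pow_le_pow_of_le_one h0 (by linarith) hj.2.le)
                (pow_le_one₀ h2 (by linarith)) (by positivity) (by positivity)
          _ ≤ (1/64) ^ t := by rw [mul_one]; gcongr
    _ ≤ (1/64:ℝ)^t * (2 * 4^t) := by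
        rw [← Finset.mul_sum]
        exact mul_le_mul_of_nonneg_left (choose_sum_le t _ (Finset.filter_subset _ _)) (by positivity)
    _ = 2 * (1/16) ^ t := by
        rw [mul_left_comm, ← mul_pow]; norm_num

lemma majP_large (t : ℕ) (y : ℝ) (h0 : 1 - y ≤ 1/64) (h1 : y ≤ 1) :
    |1 - majP t y| ≤ 2 * (1/16) ^ t := by
  have h2 : 0 ≤ 1 - y := by linarith
  have h3 : 0 ≤ y := by linarith
  have := maj_aux t y
  have e : 1 - majP t y = ∑ j ∈ Finset.range (2*t+2) with ¬ t < j,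
      y ^ j * (1 - y) ^ (2*t+1-j) * ((2*t+1).choose j : ℝ) := by linarith
  rw [e, abs_of_nonneg (Finset.sum_nonneg (fun _ _ => by positivity))]
  calc _ ≤ ∑ j ∈ Finset.range (2*t+2) with ¬ t < j, (1/64:ℝ)^t * ((2*t+1).choose j : ℝ) := by
        refine Finset.sum_le_sum (fun j hj => ?_)
        simp only [Finset.mem_filter] at hj
        refine mul_le_mul_of_nonneg_right ?_ (by positivity)
        calc y ^ j * (1 - y) ^ (2*t+1-j) ≤ 1 * (1-y) ^ t :=
              mul_le_mul (pow_le_one₀ h3 h1)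
                (pow_le_pow_of_le_one h2 (by linarith) (by omega)) (by positivity) (by positivity)
          _ ≤ (1/64) ^ t := by rw [one_mul]; gcongr
    _ ≤ (1/64:ℝ)^t * (2 * 4^t) := by
        rw [← Finset.mul_sum]
        exact mul_le_mul_of_nonneg_left (choose_sum_le t _ (Finset.filter_subset _ _)) (by positivity)
    _ = 2 * (1/16) ^ t := by
        rw [mul_left_comm, ← mul_pow]; norm_num

lemma majP_mem {M D : ℕ} (q : (Fin M → Bool) → ℝ) (hq : q ∈ LD M D) (t : ℕ) :
    (fun x => majP t (q x)) ∈ LD M ((2*t+1) * D) := by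
  have h : (fun x => majP t (q x)) = ∑ j ∈ Finset.range (2*t+2) with t < j,
      ((2*t+1).choose j : ℝ) • (q ^ j * (1 - q) ^ (2*t+1-j)) := by
    ext x
    simp only [majP, Finset.sum_apply, Pi.smul_apply, Pi.mul_apply, Pi.pow_apply, Pi.sub_apply,
      Pi.one_apply, smul_eq_mul]
    exact Finset.sum_congr rfl (fun j _ => by ring)
  rw [h]
  refine Submodule.sum_mem _ (fun j hj => Submodule.smul_mem _ _ ?_)
  simp only [Finset.mem_filter, Finset.mem_range] at hj
  have h1 := LD_mul (LD_pow hq j) (LD_pow (Submodule.sub_mem _ one_mem_LD hq) (2*t+1-j))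
  rwa [← Nat.add_mul, Nat.add_sub_cancel' (by omega)] at h1

lemma fourier_tail {M D : ℕ} (φ : DMF (Fin M)) (hD : 520 * √(φ.size) < D + 1) (t : ℕ) :
    ∑ S with t * (3 * D) < S.card, fc (ind φ.eval) S ^ 2 ≤ 4 * (1/256) ^ t := by
  obtain ⟨p, hp, happ⟩ := approx_degree (D := D) φ (1/130) (by norm_num) (by linarith)
  let q : (Fin M → Bool) → ℝ := (130/132 : ℝ) • (p + (1/130 : ℝ) • 1)
  have hq : q ∈ LD M D := Submodule.smul_mem _ _
    (Submodule.add_mem _ hp (Submodule.smul_mem _ _ one_mem_LD))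
  have hqx : ∀ x, q x = 130/132 * (p x + 1/130) := fun x => by simp [q]; ring
  have happ2 : ∀ x, |ind φ.eval x - majP t (q x)| ≤ 2 * (1/16) ^ t := by
    intro x
    have h1 := abs_le.mp (happ x)
    unfold ind at h1 ⊢
    split_ifs at h1 ⊢ with hx
    · apply majP_large <;> rw [hqx] <;> linarith [h1.1, h1.2]
    · rw [zero_sub, abs_neg]
      apply majP_small <;> rw [hqx] <;> linarith [h1.1, h1.2]
  have htail := tail_of_approx _ _ _ (majP_mem q hq t) happ2
  have hpow : (2 * (1/16 : ℝ) ^ t) ^ 2 = 4 * (1/256) ^ t := by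
    rw [mul_pow, ← pow_mul, mul_comm t 2, pow_mul]; norm_num
  rw [hpow] at htail
  rcases Nat.eq_zero_or_pos t with rfl | ht
  · have h1 : ∑ S, fc (ind φ.eval) S ^ 2 ≤ 1 := by
      rw [parseval, div_le_one (by positivity)]
      calc ∑ x, ind φ.eval x ^ 2 ≤ ∑ _x : Fin M → Bool, (1:ℝ) :=
            Finset.sum_le_sum (fun x _ => by
              have := ind_abs φ.eval x
              rw [← sq_abs]; exact pow_le_one₀ (abs_nonneg _) this)
        _ = 2 ^ M := by simp
    refine le_trans (Finset.sum_le_sum_of_subset_of_nonneg (Finset.filter_subset _ _)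
      (fun _ _ _ => sq_nonneg _)) (h1.trans ?_)
    norm_num
  · refine le_trans (Finset.sum_le_sum_of_subset_of_nonneg ?_ (fun _ _ _ => sq_nonneg _)) htail
    intro S hS
    simp only [Finset.mem_filter, Finset.mem_univ, true_and] at hS ⊢
    refine lt_of_le_of_lt ?_ hS
    calc (2*t+1) * D ≤ (3*t) * D := Nat.mul_le_mul_right _ (by omega)
      _ = t * (3 * D) := by ring

lemma choose_le_aux (D m k t : ℕ) (hD : 1 ≤ D) (hm : m ≤ (t+1) * D) :
    (m.choose k : ℝ) ≤ (D:ℝ)^k * 4 ^ (t+1) := by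
  have hD0 : (0:ℝ) < D := by exact_mod_cast hD
  have h1 : (m.choose k : ℝ) * (1/(D:ℝ))^k ≤ (1/(D:ℝ) + 1)^m := by
    rcases Nat.lt_or_ge m k with h | h
    · rw [Nat.choose_eq_zero_of_lt h]; simp; positivity
    · rw [add_pow]
      refine le_trans (le_of_eq ?_) (Finset.single_le_sum (f := fun j =>
        (1/(D:ℝ))^j * 1^(m-j) * (m.choose j : ℝ)) (fun j _ => by positivity)
        (Finset.mem_range.mpr (Nat.lt_succ_of_le h)))
      simp only [one_pow]; ring
  have h2 : (1/(D:ℝ) + 1)^D ≤ 4 := by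
    calc (1/(D:ℝ) + 1)^D ≤ (Real.exp (1/D))^D := by
          gcongr; exact Real.add_one_le_exp _
      _ = Real.exp 1 := by
          rw [← Real.exp_nat_mul]; congr 1; field_simp
      _ ≤ 4 := by linarith [Real.exp_one_lt_d9]
  have h3 : (1/(D:ℝ) + 1)^m ≤ 4^(t+1) := by
    calc (1/(D:ℝ) + 1)^m ≤ (1/(D:ℝ) + 1)^((t+1)*D) :=
          pow_le_pow_right₀ (by simp) hm
      _ = ((1/(D:ℝ) + 1)^D)^(t+1) := by rw [mul_comm, pow_mul]
      _ ≤ 4^(t+1) := by gcongr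
  have h4 := h1.trans h3
  rw [one_div, inv_pow, ← div_eq_mul_inv, div_le_iff₀ (by positivity)] at h4
  linarith

lemma fourier_moment {M D : ℕ} (φ : DMF (Fin M)) (hD1 : 1 ≤ D)
    (hD : 520 * √(φ.size) < D + 1) (k : ℕ) (hk : 1 ≤ k) :
    ∑ S : Finset (Fin M), (S.card.choose k : ℝ) * fc (ind φ.eval) S ^ 2
      ≤ 32 * (3 * (D:ℝ)) ^ k := by
  set a : Finset (Fin M) → ℝ := fun S => fc (ind φ.eval) S ^ 2 with ha
  have ha0 : ∀ S, 0 ≤ a S := fun S => sq_nonneg _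
  have hpt : ∀ S : Finset (Fin M), (S.card.choose k : ℝ) * a S ≤
      ∑ t ∈ Finset.range M, (if t * (3 * D) < S.card then
        (3 * (D:ℝ)) ^ k * 4 ^ (t+1) * a S else 0) := by
    intro S
    have hnn : ∀ t ∈ Finset.range M, 0 ≤ (if t * (3 * D) < S.card then
        (3 * (D:ℝ)) ^ k * 4 ^ (t+1) * a S else 0) := by
      intro t _
      have := ha0 S
      split_ifs <;> positivity
    rcases Nat.eq_zero_or_pos S.card with h0 | h0
    · rw [h0, Nat.choose_eq_zero_of_lt (by omega)]
      simp only [Nat.cast_zero, zero_mul]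
      simp
    · have hSM : S.card ≤ M := by simpa using S.card_le_univ
      have hdm := Nat.div_add_mod (S.card - 1) (3 * D)
      have hml := Nat.mod_lt (S.card - 1) (show 3 * D > 0 by omega)
      have hdl := Nat.div_le_self (S.card - 1) (3 * D)
      set t := (S.card - 1) / (3 * D) with ht
      refine le_trans ?_ (Finset.single_le_sum hnn (Finset.mem_range.mpr (show t < M by omega)))
      rw [mul_comm (3 * D) t] at hdm
      rw [if_pos (by omega)]
      refine mul_le_mul_of_nonneg_right ?_ (ha0 S)
      have := choose_le_aux (3 * D) S.card k t (by omega) (by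
        rw [Nat.add_mul]; omega)
      push_cast at this
      exact this
  calc ∑ S : Finset (Fin M), (S.card.choose k : ℝ) * a S
      ≤ ∑ S : Finset (Fin M), ∑ t ∈ Finset.range M, (if t * (3 * D) < S.card then
        (3 * (D:ℝ)) ^ k * 4 ^ (t+1) * a S else 0) := Finset.sum_le_sum (fun S _ => hpt S)
    _ = ∑ t ∈ Finset.range M, (3 * (D:ℝ)) ^ k * 4 ^ (t+1) *
          ∑ S with t * (3 * D) < S.card, a S := by
        rw [Finset.sum_comm]
        refine Finset.sum_congr rfl (fun t _ => ?_)
        rw [← Finset.sum_filter, Finset.mul_sum]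
    _ ≤ ∑ t ∈ Finset.range M, (3 * (D:ℝ)) ^ k * 4 ^ (t+1) * (4 * (1/256) ^ t) := by
        refine Finset.sum_le_sum (fun t _ => ?_)
        exact mul_le_mul_of_nonneg_left (fourier_tail φ hD t) (by positivity)
    _ = 16 * (3 * (D:ℝ)) ^ k * ∑ t ∈ Finset.range M, (1/64 : ℝ) ^ t := by
        rw [Finset.mul_sum]
        refine Finset.sum_congr rfl (fun t _ => ?_)
        have h64 : (1/64 : ℝ) ^ t = 4 ^ t * (1/256) ^ t := by rw [← mul_pow]; norm_num
        rw [h64, pow_succ]; ring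
    _ ≤ 16 * (3 * (D:ℝ)) ^ k * 2 := by
        refine mul_le_mul_of_nonneg_left ?_ (by positivity)
        have := geom_sum_eq (show (1/64 : ℝ) ≠ 1 by norm_num) M
        rw [this]
        have h : (0:ℝ) ≤ (1/64) ^ M := by positivity
        rw [div_le_iff_of_neg (by norm_num)]
        linarith
    _ = 32 * (3 * (D:ℝ)) ^ k := by ring


/-- Flip the coordinates in `V`. -/
def flp {M : ℕ} (V : Finset (Fin M)) (x : Fin M → Bool) : Fin M → Bool :=
  fun i => xor (x i) (decide (i ∈ V))

/-- The discrete derivative in directions `U`. -/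
noncomputable def Df {M : ℕ} (U : Finset (Fin M)) (g : (Fin M → Bool) → ℝ) (x : Fin M → Bool) : ℝ :=
  ∑ V ∈ U.powerset, (-1) ^ V.card * g (flp V x)

lemma chi_flp {M : ℕ} (S V : Finset (Fin M)) (x : Fin M → Bool) :
    chi S (flp V x) = chi S x * ∏ i ∈ V, (if i ∈ S then (-1:ℝ) else 1) := by
  have h : ∏ i ∈ V, (if i ∈ S then (-1:ℝ) else 1) = ∏ i ∈ S, (if i ∈ V then (-1:ℝ) else 1) := by
    rw [Finset.prod_ite_mem, Finset.prod_ite_mem, Finset.inter_comm]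
  rw [h]
  unfold chi
  rw [← Finset.prod_mul_distrib]
  refine Finset.prod_congr rfl (fun i _ => ?_)
  by_cases hi : i ∈ V <;> cases hx : x i <;> simp [flp, sg, hi, hx]

lemma Df_eq {M : ℕ} (U : Finset (Fin M)) (g : (Fin M → Bool) → ℝ) (x : Fin M → Bool) :
    Df U g x = ∑ S, (if U ⊆ S then 2 ^ U.card * fc g S else 0) * chi S x := by
  unfold Df
  have h1 : ∀ V ∈ U.powerset, (-1 : ℝ) ^ V.card * g (flp V x)
      = ∑ S, fc g S * chi S x * ∏ i ∈ V, (if i ∈ S then (1:ℝ) else -1) := by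
    intro V _
    rw [fc_inv g (flp V x), Finset.mul_sum]
    refine Finset.sum_congr rfl (fun S _ => ?_)
    rw [chi_flp, ← Finset.prod_const]
    have : ∏ i ∈ V, (if i ∈ S then (1:ℝ) else -1)
        = (∏ i ∈ V, (-1:ℝ)) * ∏ i ∈ V, (if i ∈ S then (-1:ℝ) else 1) := by
      rw [← Finset.prod_mul_distrib]
      refine Finset.prod_congr rfl (fun i _ => ?_)
      split_ifs <;> norm_num
    rw [this]; ring
  rw [Finset.sum_congr rfl h1, Finset.sum_comm]
  refine Finset.sum_congr rfl (fun S _ => ?_)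
  rw [← Finset.mul_sum, ← Finset.prod_one_add]
  split_ifs with hU
  · have : ∏ i ∈ U, (1 + if i ∈ S then (1:ℝ) else -1) = 2 ^ U.card := by
      rw [← Finset.prod_const]
      refine Finset.prod_congr rfl (fun i hi => ?_)
      rw [if_pos (hU hi)]; norm_num
    rw [this]; ring
  · obtain ⟨i, hi, hi2⟩ := Finset.not_subset.mp hU
    rw [Finset.prod_eq_zero hi (by simp [hi2])]; ring

lemma fc_of_sum {M : ℕ} (g : (Fin M → Bool) → ℝ) (a : Finset (Fin M) → ℝ)
    (h : ∀ x, g x = ∑ S, a S * chi S x) (T : Finset (Fin M)) : fc g T = a T := by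
  unfold fc
  have : ∑ x, g x * chi T x = ∑ S, a S * ∑ x, chi S x * chi T x := by
    simp only [h, Finset.sum_mul, Finset.mul_sum]
    rw [Finset.sum_comm]
    simp only [mul_assoc]
  rw [this]
  simp only [chi_orth]
  simp

lemma Df_l2 {M : ℕ} (U : Finset (Fin M)) (g : (Fin M → Bool) → ℝ) :
    (∑ x, Df U g x ^ 2) / 2 ^ M = 4 ^ U.card * ∑ S, if U ⊆ S then fc g S ^ 2 else 0 := by
  rw [← parseval, Finset.mul_sum]
  refine Finset.sum_congr rfl (fun S _ => ?_)
  rw [fc_of_sum _ _ (Df_eq U g)]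
  split_ifs
  · rw [mul_pow, ← pow_mul, mul_comm U.card 2, pow_mul]; norm_num
  · simp

lemma Df_level {M : ℕ} (k : ℕ) (g : (Fin M → Bool) → ℝ) :
    ∑ U with U.card = k, (∑ x, Df U g x ^ 2) / 2 ^ M
      = 4 ^ k * ∑ S, (S.card.choose k : ℝ) * fc g S ^ 2 := by
  have h1 : ∀ U ∈ Finset.univ.filter (fun U : Finset (Fin M) => U.card = k),
      (∑ x, Df U g x ^ 2) / 2 ^ M = 4 ^ k * ∑ S, if U ⊆ S then fc g S ^ 2 else 0 := by
    intro U hU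
    rw [Df_l2]
    simp only [Finset.mem_filter] at hU
    rw [hU.2]
  rw [Finset.sum_congr rfl h1, ← Finset.mul_sum, Finset.sum_comm]
  congr 1
  refine Finset.sum_congr rfl (fun S _ => ?_)
  rw [← Finset.sum_filter, Finset.sum_const, nsmul_eq_mul]
  congr 2
  rw [← Finset.card_powersetCard]
  congr 1
  ext U
  simp [Finset.mem_powersetCard, and_comm]

/-- Inclusion-maximal element of the Fourier support. -/
def IsMaxU {M : ℕ} (g : (Fin M → Bool) → Bool) (U : Finset (Fin M)) : Prop :=
  fc (ind g) U ≠ 0 ∧ ∀ S, U ⊆ S → fc (ind g) S ≠ 0 → S = U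

lemma Df_int {M : ℕ} (g : (Fin M → Bool) → Bool) (U : Finset (Fin M)) (x : Fin M → Bool) :
    ∃ z : ℤ, Df U (ind g) x = z := by
  refine ⟨∑ V ∈ U.powerset, (-1) ^ V.card * (if g (flp V x) then 1 else 0), ?_⟩
  unfold Df ind
  push_cast
  rfl

lemma Df_max {M : ℕ} (g : (Fin M → Bool) → Bool) (U : Finset (Fin M)) (h : IsMaxU g U)
    (x : Fin M → Bool) : Df U (ind g) x = 2 ^ U.card * fc (ind g) U * chi U x := by
  rw [Df_eq, Finset.sum_eq_single U]
  · simp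
  · intro S _ hS
    split_ifs with hU
    · have : fc (ind g) S = 0 := by
        by_contra h0
        exact hS (h.2 S hU h0)
      rw [this]; ring
    · ring
  · simp

lemma Df_max_sq {M : ℕ} (g : (Fin M → Bool) → Bool) (U : Finset (Fin M)) (h : IsMaxU g U)
    (x : Fin M → Bool) : 1 ≤ Df U (ind g) x ^ 2 := by
  have h0 : Df U (ind g) x ≠ 0 := by
    rw [Df_max g U h]
    refine mul_ne_zero (mul_ne_zero (by positivity) h.1) ?_
    intro h2
    have := chi_sq U x
    rw [h2] at this
    norm_num at this
  obtain ⟨z, hz⟩ := Df_int g U x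
  rw [hz] at h0 ⊢
  have hz0 : z ≠ 0 := by exact_mod_cast h0
  have : 1 ≤ z ^ 2 := by
    have := sq_pos_of_ne_zero hz0 
    omega
  exact_mod_cast this

lemma max_fc {M : ℕ} (g : (Fin M → Bool) → Bool) (U : Finset (Fin M)) (h : IsMaxU g U) :
    1 ≤ 4 ^ U.card * fc (ind g) U ^ 2 := by
  have h1 := Df_max_sq g U h (fun _ => false)
  rw [Df_max g U h] at h1
  have h2 : chi U (fun _ : Fin M => false) = 1 := by simp [chi, sg]
  rw [h2, mul_one, mul_pow, ← pow_mul, mul_comm U.card 2, pow_mul] at h1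
  norm_num at h1
  linarith

lemma flp_flp {M : ℕ} (V : Finset (Fin M)) (x : Fin M → Bool) : flp V (flp V x) = x := by
  ext i; simp [flp]

/-- A variable on which `g` does not depend is in no Fourier support set. -/
lemma fc_indep {M : ℕ} (g : (Fin M → Bool) → ℝ) (i : Fin M) (h : ∀ x, g (flp {i} x) = g x)
    (S : Finset (Fin M)) (hi : i ∈ S) : fc g S = 0 := by
  have e : ∑ x, g x * chi S x = ∑ x, g (flp {i} x) * chi S (flp {i} x) :=
    (Equiv.sum_comp (⟨flp {i}, flp {i}, flp_flp _, flp_flp _⟩ : (Fin M → Bool) ≃ (Fin M → Bool))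
      (fun x => g x * chi S x)).symm
  have e2 : ∑ x, g (flp {i} x) * chi S (flp {i} x) = - ∑ x, g x * chi S x := by
    rw [← Finset.sum_neg_distrib]
    refine Finset.sum_congr rfl (fun x _ => ?_)
    rw [h, chi_flp]; simp [hi]
  unfold fc
  have : ∑ x, g x * chi S x = 0 := by linarith
  rw [this, zero_div]

/-- Apply restriction. -/
def app {M : ℕ} (ρ : Fin M → Option Bool) (x : Fin M → Bool) : Fin M → Bool :=
  fun i => (ρ i).getD (x i)

lemma max_restrict {M : ℕ} (f : (Fin M → Bool) → Bool) (ρ : Fin M → Option Bool)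
    (U : Finset (Fin M)) (h : IsMaxU (restrict f ρ) U) :
    (∀ i ∈ U, ρ i = none) ∧ ∀ x, 1 ≤ Df U (ind f) (app ρ x) ^ 2 := by
  have h1 : ∀ i ∈ U, ρ i = none := by
    intro i hi
    by_contra hne
    refine h.1 (fc_indep _ i (fun x => ?_) U hi)
    have : app ρ (flp {i} x) = app ρ x := by
      ext j
      unfold app flp
      by_cases hj : j = i
      · subst hj
        obtain ⟨b, hb⟩ := Option.ne_none_iff_exists'.mp hne
        simp [hb]
      · simp [hj]
    change (if f (app ρ (flp {i} x)) then (1:ℝ) else 0) = if f (app ρ x) then 1 else 0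
    rw [this]
  refine ⟨h1, fun x => ?_⟩
  have h2 := Df_max_sq _ U h x
  have : Df U (ind (restrict f ρ)) x = Df U (ind f) (app ρ x) := by
    unfold Df
    refine Finset.sum_congr rfl (fun V hV => ?_)
    congr 1
    have : app ρ (flp V x) = flp V (app ρ x) := by
      ext j
      unfold app flp
      by_cases hj : j ∈ V
      · simp [h1 j (Finset.mem_powerset.mp hV hj)]
      · simp [hj]
    change (if f (app ρ (flp V x)) then (1:ℝ) else 0) = if f (flp V (app ρ x)) then 1 else 0
    rw [this]
  rwa [this] at h2

/-- weight of a restriction -/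
noncomputable def wt {M : ℕ} (p : ℝ) (ρ : Fin M → Option Bool) : ℝ := ∏ i, rWeight p (ρ i)

lemma wt_nonneg {M : ℕ} {p : ℝ} (h0 : 0 ≤ p) (h1 : p ≤ 1) (ρ : Fin M → Option Bool) :
    0 ≤ wt p ρ := by
  refine Finset.prod_nonneg (fun i _ => ?_)
  cases ρ i <;> simp only [rWeight] <;> linarith

lemma wt_sum {M : ℕ} (p : ℝ) : ∑ ρ : Fin M → Option Bool, wt p ρ = 1 := by
  have : ∑ ρ : Fin M → Option Bool, wt p ρ = ∏ _i : Fin M, ∑ o : Option Bool, rWeight p o := by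
    rw [Finset.prod_univ_sum, Fintype.piFinset_univ]
    rfl
  rw [this]
  refine Finset.prod_eq_one (fun i _ => ?_)
  simp [Fintype.sum_option, rWeight]
  ring

lemma wt_app {M : ℕ} (p : ℝ) (U : Finset (Fin M)) (F : (Fin M → Bool) → ℝ) :
    ∑ ρ : Fin M → Option Bool, wt p ρ * (if ∀ i ∈ U, ρ i = none then ∑ x, F (app ρ x) else 0)
      = p ^ U.card * ∑ z, F z := by
  have h1 : ∀ z : Fin M → Bool, ∑ ρ : Fin M → Option Bool, ∑ x : Fin M → Bool,
      (wt p ρ * (if ∀ i ∈ U, ρ i = none then 1 else 0)) * (if app ρ x = z then 1 else 0)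
      = p ^ U.card := by
    intro z
    have e : ∀ (ρ : Fin M → Option Bool) (x : Fin M → Bool),
        (wt p ρ * (if ∀ i ∈ U, ρ i = none then 1 else 0)) * (if app ρ x = z then (1:ℝ) else 0)
        = ∏ i, ((rWeight p (ρ i) * (if i ∈ U → ρ i = none then 1 else 0)) *
          (if (ρ i).getD (x i) = z i then 1 else 0)) := by
      intro ρ x
      rw [Finset.prod_mul_distrib, Finset.prod_mul_distrib, Finset.prod_ite_zero,
        Finset.prod_ite_zero]
      simp [wt, app, funext_iff]
    simp only [e]
    have e2 : ∀ ρ : Fin M → Option Bool, ∑ x : Fin M → Bool,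
        ∏ i, ((rWeight p (ρ i) * (if i ∈ U → ρ i = none then 1 else 0)) *
          (if (ρ i).getD (x i) = z i then (1:ℝ) else 0))
        = ∏ i, ∑ b : Bool, ((rWeight p (ρ i) * (if i ∈ U → ρ i = none then 1 else 0)) *
          (if (ρ i).getD b = z i then 1 else 0)) := by
      intro ρ
      rw [Finset.prod_univ_sum, Fintype.piFinset_univ]
    simp only [e2]
    have e3 : ∑ ρ : Fin M → Option Bool,
        ∏ i, ∑ b : Bool, ((rWeight p (ρ i) * (if i ∈ U → ρ i = none then 1 else 0)) *
          (if (ρ i).getD b = z i then (1:ℝ) else 0))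
        = ∏ i, ∑ o : Option Bool, ∑ b : Bool, ((rWeight p o *
          (if i ∈ U → o = none then 1 else 0)) * (if o.getD b = z i then 1 else 0)) := by
      rw [Finset.prod_univ_sum, Fintype.piFinset_univ]
    rw [e3]
    have e4 : ∀ i, ∑ o : Option Bool, ∑ b : Bool, ((rWeight p o *
          (if i ∈ U → o = none then 1 else 0)) * (if o.getD b = z i then (1:ℝ) else 0))
          = if i ∈ U then p else 1 := by
      intro i
      by_cases hi : i ∈ U <;> cases hz : z i <;>
        simp [Fintype.sum_option, hi, rWeight]
    simp only [e4]
    rw [Finset.prod_ite_mem, Finset.univ_inter, Finset.prod_const]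
  calc _ = ∑ ρ : Fin M → Option Bool, ∑ x : Fin M → Bool, ∑ z, F z *
      ((wt p ρ * (if ∀ i ∈ U, ρ i = none then 1 else 0)) * (if app ρ x = z then 1 else 0)) := by
        refine Finset.sum_congr rfl (fun ρ _ => ?_)
        split_ifs
        · rw [Finset.mul_sum]
          refine Finset.sum_congr rfl (fun x _ => ?_)
          simp [mul_comm]
        · simp
    _ = ∑ z, F z * p ^ U.card := by
        have : ∀ ρ : Fin M → Option Bool, ∑ x : Fin M → Bool, ∑ z, F z *
          ((wt p ρ * (if ∀ i ∈ U, ρ i = none then 1 else 0)) * (if app ρ x = z then 1 else 0))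
          = ∑ z, ∑ x : Fin M → Bool, F z *
          ((wt p ρ * (if ∀ i ∈ U, ρ i = none then 1 else 0)) * (if app ρ x = z then 1 else 0)) :=
          fun ρ => Finset.sum_comm
        simp only [this]
        rw [Finset.sum_comm]
        refine Finset.sum_congr rfl (fun z _ => ?_)
        rw [← h1 z, Finset.mul_sum]
        refine Finset.sum_congr rfl (fun ρ _ => ?_)
        rw [Finset.mul_sum]
    _ = _ := by rw [← Finset.sum_mul, mul_comm]

open Classical in
lemma max_prob {M : ℕ} {p : ℝ} (h0 : 0 ≤ p) (h1 : p ≤ 1) (f : (Fin M → Bool) → Bool)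
    (U : Finset (Fin M)) :
    ∑ ρ : Fin M → Option Bool, wt p ρ * (if IsMaxU (restrict f ρ) U then 1 else 0)
      ≤ p ^ U.card * ((∑ x, Df U (ind f) x ^ 2) / 2 ^ M) := by
  rw [← mul_div_assoc, ← wt_app, Finset.sum_div]
  refine Finset.sum_le_sum (fun ρ _ => ?_)
  rw [mul_div_assoc]
  refine mul_le_mul_of_nonneg_left ?_ (wt_nonneg h0 h1 ρ)
  split_ifs with ha hb hb
  · rw [le_div_iff₀ (by positivity)]
    calc (1:ℝ) * 2 ^ M = ∑ _x : Fin M → Bool, (1:ℝ) := by simp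
      _ ≤ _ := Finset.sum_le_sum (fun x _ => (max_restrict f ρ U ha).2 x)
  · exact absurd (max_restrict f ρ U ha).1 hb
  · positivity
  · simp

open Classical in
lemma max_tail {M D d : ℕ} {p : ℝ} (h0 : 0 ≤ p) (h1 : p ≤ 1) (φ : DMF (Fin M)) (hD1 : 1 ≤ D)
    (hD : 520 * √(φ.size) < D + 1) (hd : 1 ≤ d) (hq : 12 * p * D ≤ 1 / 2) :
    ∑ ρ : Fin M → Option Bool, wt p ρ *
      (if ∃ U, d ≤ U.card ∧ IsMaxU (restrict φ.eval ρ) U then 1 else 0)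
      ≤ 64 * (12 * p * D) ^ d := by
  set q : ℝ := 12 * p * D with hqdef
  have hq0 : 0 ≤ q := by positivity
  calc _ ≤ ∑ ρ : Fin M → Option Bool, ∑ k ∈ Finset.range (M + 1), ∑ U with U.card = k,
        (if d ≤ k then wt p ρ * (if IsMaxU (restrict φ.eval ρ) U then 1 else 0) else 0) := by
        refine Finset.sum_le_sum (fun ρ _ => ?_)
        have hw := wt_nonneg h0 h1 ρ
        have hnn : ∀ k U, 0 ≤ (if d ≤ k then wt p ρ * (if IsMaxU (restrict φ.eval ρ) U
            then 1 else 0) else 0 : ℝ) := by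
          intro k U; split_ifs <;> simp [hw]
        split_ifs with he
        · obtain ⟨U, hU1, hU2⟩ := he
          have hk : U.card ∈ Finset.range (M + 1) := by
            have := Finset.card_le_univ U
            simp at this ⊢; omega
          calc wt p ρ * 1 = (if d ≤ U.card then wt p ρ * (if IsMaxU (restrict φ.eval ρ) U
                  then 1 else 0) else 0 : ℝ) := by simp [hU1, hU2]
            _ ≤ ∑ U' with U'.card = U.card, (if d ≤ U.card then wt p ρ *
                  (if IsMaxU (restrict φ.eval ρ) U' then 1 else 0) else 0 : ℝ) :=
                Finset.single_le_sum (f := fun U' => (if d ≤ U.card then wt p ρ *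
                  (if IsMaxU (restrict φ.eval ρ) U' then 1 else 0) else 0 : ℝ))
                  (fun U' _ => hnn _ U') (by simp)
            _ ≤ _ := Finset.single_le_sum (f := fun k => ∑ U' with U'.card = k,
                  (if d ≤ k then wt p ρ *
                  (if IsMaxU (restrict φ.eval ρ) U' then 1 else 0) else 0 : ℝ))
                  (fun k _ => Finset.sum_nonneg (fun U' _ => hnn _ U')) hk
        · rw [mul_zero]
          exact Finset.sum_nonneg (fun k _ => Finset.sum_nonneg (fun U' _ => hnn _ U'))
    _ = ∑ k ∈ Finset.range (M + 1), if d ≤ k then ∑ U with U.card = k, ∑ ρ : Fin M → Option Bool,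
          wt p ρ * (if IsMaxU (restrict φ.eval ρ) U then 1 else 0) else 0 := by
        rw [Finset.sum_comm]
        refine Finset.sum_congr rfl (fun k _ => ?_)
        rw [Finset.sum_comm]
        split_ifs
        · rfl
        · simp
    _ ≤ ∑ k ∈ Finset.range (M + 1), if d ≤ k then 32 * q ^ k else 0 := by
        refine Finset.sum_le_sum (fun k _ => ?_)
        split_ifs with hk
        · calc _ ≤ ∑ U : Finset (Fin M) with U.card = k,
                p ^ k * ((∑ x, Df U (ind φ.eval) x ^ 2) / 2 ^ M) := by
                refine Finset.sum_le_sum (fun U hU => ?_)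
                have hU := (Finset.mem_filter.mp hU).2
                have := max_prob h0 h1 φ.eval U
                rwa [hU] at this
            _ = p ^ k * (4 ^ k * ∑ S, (S.card.choose k : ℝ) * fc (ind φ.eval) S ^ 2) := by
                rw [← Finset.mul_sum, Df_level]
            _ ≤ p ^ k * (4 ^ k * (32 * (3 * (D:ℝ)) ^ k)) := by
                have := fourier_moment φ hD1 hD k (by omega)
                gcongr
            _ = 32 * q ^ k := by
                have : q ^ k = p ^ k * (4 ^ k * (3 * (D:ℝ)) ^ k) := by
                  rw [← mul_pow, ← mul_pow, hqdef]; congr 1; ring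
                rw [this]; ring
        · exact le_rfl
    _ ≤ ∑ j ∈ Finset.range (M + 1), 32 * q ^ d * (1/2) ^ j := by
        rw [← Finset.sum_filter]
        calc _ ≤ ∑ k ∈ (Finset.range (M+1)).image (fun j => d + j), 32 * q ^ k := by
              refine Finset.sum_le_sum_of_subset_of_nonneg ?_ (fun _ _ _ => by positivity)
              intro k hk
              simp only [Finset.mem_filter, Finset.mem_range, Finset.mem_image] at hk ⊢
              exact ⟨k - d, by omega, by omega⟩
          _ = ∑ j ∈ Finset.range (M + 1), 32 * q ^ (d + j) :=
              Finset.sum_image (fun a _ b _ h => by simpa using h)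
          _ ≤ _ := by
              refine Finset.sum_le_sum (fun j _ => ?_)
              rw [pow_add, ← mul_assoc]
              gcongr
    _ ≤ 64 * q ^ d := by
        rw [← Finset.mul_sum, geom_sum_eq (by norm_num)]
        have h2 : (0:ℝ) ≤ (1/2) ^ (M+1) := by positivity
        have : ((1/2 : ℝ) ^ (M+1) - 1) / (1/2 - 1) ≤ 2 := by
          rw [div_le_iff_of_neg (by norm_num)]; linarith
        have := mul_le_mul_of_nonneg_left this (show 0 ≤ 32 * q ^ d by positivity)
        linarith


/-- `h` is constant or has a formula of size at most `s`. -/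
def Pf {ι : Type} (h : (ι → Bool) → Bool) (s : ℕ) : Prop :=
  (∃ c, ∀ x, h x = c) ∨ ∃ φ : DMF ι, φ.size ≤ s ∧ ∀ x, φ.eval x = h x

lemma Pf_mono {ι : Type} {h : (ι → Bool) → Bool} {s t : ℕ} (hs : Pf h s) (hst : s ≤ t) : Pf h t := by
  rcases hs with hc | ⟨φ, h1, h2⟩
  · exact Or.inl hc
  · exact Or.inr ⟨φ, h1.trans hst, h2⟩

lemma Pf_and {ι : Type} {h1 h2 : (ι → Bool) → Bool} {s1 s2 : ℕ} (H1 : Pf h1 s1) (H2 : Pf h2 s2) :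
    Pf (fun x => h1 x && h2 x) (s1 + s2) := by
  rcases H1 with ⟨c, hc⟩ | ⟨φ, hφ, hφ2⟩
  · cases c
    · exact Or.inl ⟨false, fun x => by simp [hc]⟩
    · have : (fun x => h1 x && h2 x) = h2 := by ext x; simp [hc]
      rw [this]; exact Pf_mono H2 (by omega)
  · rcases H2 with ⟨c, hc⟩ | ⟨ψ, hψ, hψ2⟩
    · cases c
      · exact Or.inl ⟨false, fun x => by simp [hc]⟩
      · exact Or.inr ⟨φ, by omega, fun x => by simp [hc, hφ2]⟩
    · exact Or.inr ⟨φ.and ψ, by simp only [DMF.size]; omega, fun x => by simp [DMF.eval, hφ2, hψ2]⟩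

lemma Pf_or {ι : Type} {h1 h2 : (ι → Bool) → Bool} {s1 s2 : ℕ} (H1 : Pf h1 s1) (H2 : Pf h2 s2) :
    Pf (fun x => h1 x || h2 x) (s1 + s2) := by
  rcases H1 with ⟨c, hc⟩ | ⟨φ, hφ, hφ2⟩
  · cases c
    · have : (fun x => h1 x || h2 x) = h2 := by ext x; simp [hc]
      rw [this]; exact Pf_mono H2 (by omega)
    · exact Or.inl ⟨true, fun x => by simp [hc]⟩
  · rcases H2 with ⟨c, hc⟩ | ⟨ψ, hψ, hψ2⟩
    · cases c
      · exact Or.inr ⟨φ, by omega, fun x => by simp [hc, hφ2]⟩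
      · exact Or.inl ⟨true, fun x => by simp [hc]⟩
    · exact Or.inr ⟨φ.or ψ, by simp only [DMF.size]; omega, fun x => by simp [DMF.eval, hφ2, hψ2]⟩

lemma Pf_leaf {ι : Type} (i : ι) (b : Bool) : Pf (fun x : ι → Bool => if b then x i else !(x i)) 1 :=
  Or.inr ⟨.leaf i b, by simp [DMF.size], fun x => by simp [DMF.eval]⟩

lemma junta {M : ℕ} (S : Finset (Fin M)) : ∀ h : (Fin M → Bool) → Bool,
    (∀ x y, (∀ i ∈ S, x i = y i) → h x = h y) → Pf h (2 ^ (S.card + 1) - 2) := by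
  induction S using Finset.induction_on with
  | empty =>
    intro h H
    exact Or.inl ⟨h (fun _ => false), fun x => H _ _ (by simp)⟩
  | insert i S hi ih =>
    intro h H
    have hb : ∀ b : Bool, Pf (fun x => h (Function.update x i b)) (2 ^ (S.card + 1) - 2) := by
      intro b
      refine ih _ (fun x y hxy => H _ _ (fun j hj => ?_))
      by_cases hji : j = i
      · subst hji; simp
      · simp only [Function.update_of_ne hji]
        exact hxy j ((Finset.mem_insert.mp hj).resolve_left hji)
    have e : h = fun x => ((if true then x i else !(x i)) && h (Function.update x i true)) ||
        ((if false then x i else !(x i)) && h (Function.update x i false)) := by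
      ext x
      cases hx : x i
      · have : Function.update x i false = x := by rw [← hx]; exact Function.update_eq_self _ _
        simp [this]
      · have : Function.update x i true = x := by rw [← hx]; exact Function.update_eq_self _ _
        simp [this]
    rw [e]
    refine Pf_mono (Pf_or (Pf_and (Pf_leaf i true) (hb true)) (Pf_and (Pf_leaf i false) (hb false))) ?_
    rw [Finset.card_insert_of_notMem hi, pow_succ 2 (S.card + 1)]
    have : 2 ≤ 2 ^ (S.card + 1) := by
      rw [pow_succ]; have := Nat.one_le_two_pow (n := S.card); omega
    omega

lemma Lc_le_iff {M : ℕ} (h : (Fin M → Bool) → Bool) (s : ℕ) : Lc h ≤ s ↔ Pf h s := by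
  unfold Lc
  split_ifs with hc
  · exact ⟨fun _ => Or.inl hc, fun _ => Nat.zero_le _⟩
  · constructor
    · intro hs
      have hne : {s | ∃ φ : DMF (Fin M), φ.size = s ∧ ∀ x, φ.eval x = h x}.Nonempty := by
        rcases junta Finset.univ h (fun x y hxy => by
          rw [show x = y from funext (fun i => hxy i (Finset.mem_univ i))]) with h1 | ⟨φ, _, h2⟩
        · exact absurd h1 hc
        · exact ⟨_, φ, rfl, h2⟩
      obtain ⟨φ, h1, h2⟩ := Nat.sInf_mem hne
      exact Or.inr ⟨φ, by omega, h2⟩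
    · rintro (h1 | ⟨φ, h1, h2⟩)
      · exact absurd h1 hc
      · refine le_trans (Nat.sInf_le (m := φ.size) ?_) h1
        exact ⟨φ, rfl, h2⟩

open Classical in
lemma small_of_max {M d : ℕ} (g : (Fin M → Bool) → Bool) (h : ∀ U, IsMaxU g U → U.card < d) :
    Lc g ≤ 2 ^ (4 ^ d * d + 1) := by
  set S : Finset (Fin M) := (Finset.univ.filter (IsMaxU g)).biUnion id with hS
  have hcard : (Finset.univ.filter (IsMaxU g)).card ≤ 4 ^ d := by
    have : ((Finset.univ.filter (IsMaxU g)).card : ℝ) ≤ 4 ^ d := by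
      calc ((Finset.univ.filter (IsMaxU g)).card : ℝ) = ∑ U with IsMaxU g U, (1:ℝ) := by simp
        _ ≤ ∑ U with IsMaxU g U, 4 ^ d * fc (ind g) U ^ 2 := by
          refine Finset.sum_le_sum (fun U hU => ?_)
          have hU := (Finset.mem_filter.mp hU).2
          refine (max_fc g U hU).trans ?_
          have := (h U hU).le
          gcongr
          norm_num
        _ ≤ ∑ U, 4 ^ d * fc (ind g) U ^ 2 :=
          Finset.sum_le_sum_of_subset_of_nonneg (Finset.filter_subset _ _)
            (fun _ _ _ => by positivity)
        _ = 4 ^ d * ((∑ x, ind g x ^ 2) / 2 ^ M) := by rw [← Finset.mul_sum, parseval]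
        _ ≤ 4 ^ d * 1 := by
          gcongr
          rw [div_le_one (by positivity)]
          calc ∑ x, ind g x ^ 2 ≤ ∑ _x : Fin M → Bool, (1:ℝ) := by
                refine Finset.sum_le_sum (fun x _ => ?_)
                unfold ind; split_ifs <;> norm_num
            _ = 2 ^ M := by simp
        _ = 4 ^ d := mul_one _
    exact_mod_cast this
  have hSc : S.card ≤ 4 ^ d * d := by
    refine (Finset.card_biUnion_le_card_mul _ _ d (fun U hU => ?_)).trans
      (Nat.mul_le_mul_right _ hcard)
    exact (h U (Finset.mem_filter.mp hU).2).le
  have hsub : ∀ T, fc (ind g) T ≠ 0 → T ⊆ S := by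
    intro T hT
    obtain ⟨U, hTU, hU⟩ := (Set.toFinite {T | fc (ind g) T ≠ 0}).exists_le_maximal hT
    have hm : IsMaxU g U := ⟨hU.1, fun V hV h0 => (hU.eq_of_le h0 hV).symm⟩
    exact hTU.trans (Finset.subset_biUnion_of_mem id (by simpa using hm))
  have hj : ∀ x y, (∀ i ∈ S, x i = y i) → g x = g y := by
    intro x y hxy
    have : ind g x = ind g y := by
      rw [fc_inv (ind g) x, fc_inv (ind g) y]
      refine Finset.sum_congr rfl (fun T _ => ?_)
      by_cases hT : fc (ind g) T = 0
      · simp [hT]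
      · congr 1
        unfold chi
        exact Finset.prod_congr rfl (fun i hi => by rw [hxy i (hsub T hT hi)])
    unfold ind at this
    cases hx : g x <;> cases hy : g y <;> simp_all
  refine (Lc_le_iff _ _).mpr (Pf_mono (junta S g hj) ?_)
  exact (Nat.sub_le _ _).trans (Nat.pow_le_pow_right (by norm_num) (by omega))

open Classical in
/-- A function of small formula complexity becomes a junta with high probability. -/
lemma piece_prob {M D d s : ℕ} {p : ℝ} (h0 : 0 ≤ p) (h1 : p ≤ 1) (f : (Fin M → Bool) → Bool)
    (hf : Pf f s) (hD1 : 1 ≤ D)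
    (hD : 520 * √s < D + 1) (hd : 1 ≤ d) (hq : 12 * p * D ≤ 1 / 2) :
    ∑ ρ : Fin M → Option Bool, wt p ρ *
      (if 2 ^ (4 ^ d * d + 1) < Lc (restrict f ρ) then 1 else 0)
      ≤ 64 * (12 * p * D) ^ d := by
  rcases hf with ⟨c, hc⟩ | ⟨φ, hφ, hφf⟩
  · have : ∀ ρ, Lc (restrict f ρ) ≤ 0 := fun ρ =>
      (Lc_le_iff _ _).mpr (Or.inl ⟨c, fun x => hc _⟩)
    have h2 : ∀ ρ, ¬ (2 ^ (4 ^ d * d + 1) < Lc (restrict f ρ)) := by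
      intro ρ hlt; have := this ρ; exact absurd (lt_of_lt_of_le hlt this) (Nat.not_lt_zero _)
    simp only [h2, if_false, mul_zero, Finset.sum_const_zero]
    positivity
  · have hfe : φ.eval = f := funext hφf
    have hD2 : 520 * √(φ.size) < D + 1 := by
      refine lt_of_le_of_lt ?_ hD
      gcongr
    refine le_trans (Finset.sum_le_sum (fun ρ _ => ?_)) (max_tail h0 h1 φ hD1 hD2 hd hq)
    refine mul_le_mul_of_nonneg_left ?_ (wt_nonneg h0 h1 ρ)
    rw [hfe]
    split_ifs with ha hb hb
    · exact le_rfl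
    · exfalso
      refine absurd (small_of_max (restrict f ρ) (d := d) (fun U hU => ?_)) (by omega)
      by_contra hlt
      exact hb ⟨U, by omega, hU⟩
    · norm_num
    · exact le_rfl


/-- Decomposition of `h` into at most `B` pieces of complexity at most `s`. -/
def Dec {M : ℕ} (s : ℕ) (h : (Fin M → Bool) → Bool) (B : ℕ) : Prop :=
  ∃ L : List ((Fin M → Bool) → Bool), L.length ≤ B ∧ (∀ q ∈ L, Pf q s) ∧
    ∀ ρ, Lc (restrict h ρ) ≤ (L.map (fun q => Lc (restrict q ρ))).sum

/-- A monotone one-hole context of cost `c`. -/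
def Ctx {M : ℕ} (K : Bool → (Fin M → Bool) → Bool) (c : ℕ) : Prop :=
  (∀ x, K false x = true → K true x = true) ∧
    ∀ h m, Pf h m → Pf (fun x => K (h x) x) (c + m)

/-- Binary connectives under which complexity is additive. -/
def OpOK (op : Bool → Bool → Bool) : Prop :=
  (∀ a b, op a b = op b a) ∧ (∀ a, op a false = true → op a true = true) ∧
    ∀ (M : ℕ) (h1 h2 : (Fin M → Bool) → Bool) (s1 s2 : ℕ), Pf h1 s1 → Pf h2 s2 →
      Pf (fun x => op (h1 x) (h2 x)) (s1 + s2)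

lemma OpOK_and : OpOK and := ⟨by decide, by decide, fun _ _ _ _ _ H1 H2 => Pf_and H1 H2⟩

lemma OpOK_or : OpOK or := ⟨by decide, by decide, fun _ _ _ _ _ H1 H2 => Pf_or H1 H2⟩

lemma Dec_op {M s B1 B2 : ℕ} {op : Bool → Bool → Bool} (ho : OpOK op)
    {h1 h2 : (Fin M → Bool) → Bool} (H1 : Dec s h1 B1) (H2 : Dec s h2 B2) :
    Dec s (fun x => op (h1 x) (h2 x)) (B1 + B2) := by
  obtain ⟨L1, a1, b1, c1⟩ := H1
  obtain ⟨L2, a2, b2, c2⟩ := H2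
  refine ⟨L1 ++ L2, by simp; omega, fun q hq => ?_, fun ρ => ?_⟩
  · rcases List.mem_append.mp hq with h | h
    · exact b1 q h
    · exact b2 q h
  · rw [List.map_append, List.sum_append]
    have h := ho.2.2 M (restrict h1 ρ) (restrict h2 ρ) _ _ ((Lc_le_iff _ _).mp le_rfl)
      ((Lc_le_iff _ _).mp le_rfl)
    exact ((Lc_le_iff (restrict (fun x => op (h1 x) (h2 x)) ρ) _).mpr h).trans
      (Nat.add_le_add (c1 ρ) (c2 ρ))

lemma Dec_one {M s : ℕ} {h : (Fin M → Bool) → Bool} (H : Pf h s) : Dec s h 1 :=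
  ⟨[h], by simp, by simpa using H, by simp⟩

lemma Dec_close {M s B c : ℕ} {K : Bool → (Fin M → Bool) → Bool} (hK : Ctx K c) (hc : c ≤ s)
    {h : (Fin M → Bool) → Bool} (H : Dec s h B) : Dec s (fun x => K (h x) x) (B + 2) := by
  have hb : ∀ b : Bool, Dec s (K b) 1 := fun b =>
    Dec_one (Pf_mono (hK.2 (fun _ => b) 0 (Or.inl ⟨b, fun _ => rfl⟩)) (by omega))
  have e : (fun x => K (h x) x) = fun x => (K false x) || ((K true x) && h x) := by
    ext x
    have := hK.1 x
    cases h x <;> cases h1 : K false x <;> cases h2 : K true x <;> simp_all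
  rw [e]
  have := Dec_op OpOK_or (hb false) (Dec_op OpOK_and (hb true) H)
  rwa [show B + 2 = 1 + (1 + B) by omega]

lemma Ctx_comp {M c a : ℕ} {K : Bool → (Fin M → Bool) → Bool} (hK : Ctx K c)
    {op : Bool → Bool → Bool} (ho : OpOK op) {f : (Fin M → Bool) → Bool} (hf : Pf f a) :
    Ctx (fun z x => K (op (f x) z) x) (c + a) := by
  refine ⟨fun x => ?_, fun h m hm => ?_⟩
  · have h1 := hK.1 x
    have h2 := ho.2.1 (f x)
    cases e1 : op (f x) false <;> cases e2 : op (f x) true <;> simp_all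
  · have := hK.2 _ _ (ho.2.2 M f h a m hf hm)
    rwa [add_assoc]

lemma Ctx_id {M : ℕ} : Ctx (fun z (_ : Fin M → Bool) => z) 0 :=
  ⟨fun _ h => by simp at h, fun h m hm => by simpa using hm⟩

/-- Inductive hypothesis. -/
def TT {M : ℕ} (s : ℕ) (f : (Fin M → Bool) → Bool) (a : ℕ) : Prop :=
  Pf f a ∧ (s < a → ∀ K c, Ctx K c → c ≤ s →
    ∃ B, Dec s (fun x => K (f x) x) B ∧ s * B + 2 * s ≤ 2 * c + 6 * a)

lemma TT_mixed {M s a1 a2 c : ℕ} {op : Bool → Bool → Bool} (ho : OpOK op)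
    {f1 f2 : (Fin M → Bool) → Bool} (H1 : TT s f1 a1) (H2 : TT s f2 a2)
    (h1 : a1 ≤ s) (h2 : s < a2) {K : Bool → (Fin M → Bool) → Bool} (hK : Ctx K c) (hc : c ≤ s) :
    ∃ B, Dec s (fun x => K (op (f1 x) (f2 x)) x) B ∧ s * B + 2 * s ≤ 2 * c + 6 * (a1 + a2) := by
  by_cases hca : c + a1 ≤ s
  · obtain ⟨B, hB, hB2⟩ := H2.2 h2 _ _ (Ctx_comp hK ho H1.1) hca
    exact ⟨B, hB, by omega⟩
  · obtain ⟨B, hB, hB2⟩ := H2.2 h2 _ _ (Ctx_comp Ctx_id ho H1.1) (by omega)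
    refine ⟨B + 2, Dec_close hK hc hB, ?_⟩
    rw [mul_add]; omega

lemma TT_step {M s a1 a2 : ℕ} {op : Bool → Bool → Bool} (ho : OpOK op)
    {f1 f2 : (Fin M → Bool) → Bool} (H1 : TT s f1 a1) (H2 : TT s f2 a2) :
    TT s (fun x => op (f1 x) (f2 x)) (a1 + a2) := by
  refine ⟨ho.2.2 M _ _ _ _ H1.1 H2.1, fun hs K c hK hc => ?_⟩
  by_cases h1 : a1 ≤ s <;> by_cases h2 : a2 ≤ s
  · refine ⟨4, ?_, by omega⟩
    exact Dec_close hK hc (Dec_op ho (Dec_one (Pf_mono H1.1 h1)) (Dec_one (Pf_mono H2.1 h2)))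
  · exact TT_mixed ho H1 H2 h1 (by omega) hK hc
  · have := TT_mixed ho H2 H1 h2 (by omega) hK hc
    rw [add_comm a1 a2]
    simpa only [ho.1] using this
  · obtain ⟨B1, hB1, e1⟩ := H1.2 (by omega) _ _ Ctx_id (by omega)
    obtain ⟨B2, hB2, e2⟩ := H2.2 (by omega) _ _ Ctx_id (by omega)
    refine ⟨B1 + B2 + 2, Dec_close hK hc (Dec_op ho hB1 hB2), ?_⟩
    rw [mul_add, mul_add]; omega

lemma TT_formula {M s : ℕ} (hs : 1 ≤ s) (φ : DMF (Fin M)) : TT s φ.eval φ.size := by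
  induction φ with
  | leaf i b =>
    refine ⟨Or.inr ⟨_, le_rfl, fun _ => rfl⟩, fun h => ?_⟩
    simp only [DMF.size] at h; omega
  | and φ ψ h1 h2 => exact TT_step OpOK_and h1 h2
  | or φ ψ h1 h2 => exact TT_step OpOK_or h1 h2

lemma decomp {M s a : ℕ} (hs : 1 ≤ s) (h : (Fin M → Bool) → Bool) (hh : Pf h a) :
    ∃ B, Dec s h B ∧ s * B ≤ s + 6 * a := by
  rcases hh with hc | ⟨φ, hφ, hφ2⟩
  · exact ⟨1, Dec_one (Or.inl hc), by omega⟩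
  · have e : φ.eval = h := funext hφ2
    have H := TT_formula hs φ
    rw [e] at H
    by_cases hl : φ.size ≤ s
    · exact ⟨1, Dec_one (Pf_mono H.1 hl), by omega⟩
    · obtain ⟨B, hB, hB2⟩ := H.2 (by omega) _ _ Ctx_id (by omega)
      exact ⟨B, hB, by omega⟩

open Classical in
/-- Shrinkage of one function, with concrete parameters. -/
lemma one_shrink {M D d s a : ℕ} {p : ℝ} (h0 : 0 ≤ p) (h1 : p ≤ 1) (f : (Fin M → Bool) → Bool)
    (hf : Lc f ≤ a) (hs : 1 ≤ s) (hD1 : 1 ≤ D)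
    (hD : 520 * √s < D + 1) (hd : 1 ≤ d) (hq : 12 * p * D ≤ 1 / 2) (T : ℝ)
    (hT : 2 ^ (4 ^ d * d + 1) * (1 + 6 * (a / s : ℝ)) ≤ T) :
    ∑ ρ : Fin M → Option Bool, wt p ρ * (if T < (Lc (restrict f ρ) : ℝ) then 1 else 0)
      ≤ (1 + 6 * (a / s : ℝ)) * (64 * (12 * p * D) ^ d) := by
  obtain ⟨B, ⟨L, hL1, hL2, hL3⟩, hB⟩ := decomp hs f ((Lc_le_iff _ _).mp hf)
  set C := 2 ^ (4 ^ d * d + 1) with hC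
  have hBR : (B : ℝ) ≤ 1 + 6 * (a / s : ℝ) := by
    have hs0 : (0:ℝ) < s := by exact_mod_cast hs
    have : (s:ℝ) * B ≤ s + 6 * a := by exact_mod_cast hB
    rw [show 1 + 6 * (a / s : ℝ) = (s + 6 * a) / s by field_simp, le_div_iff₀ hs0]
    linarith
  have hq0 : 0 ≤ 64 * (12 * p * D) ^ d := by positivity
  calc _ ≤ ∑ ρ : Fin M → Option Bool, ∑ j : Fin L.length, wt p ρ *
        (if C < Lc (restrict (L.get j) ρ) then 1 else 0) := by
        refine Finset.sum_le_sum (fun ρ _ => ?_)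
        have hw := wt_nonneg h0 h1 ρ
        have hnn : ∀ j ∈ (Finset.univ : Finset (Fin L.length)), 0 ≤ wt p ρ *
            (if C < Lc (restrict (L.get j) ρ) then (1:ℝ) else 0) := by
          intro j _; split_ifs <;> simp [hw]
        split_ifs with hlt
        · by_cases hex : ∃ j : Fin L.length, C < Lc (restrict (L.get j) ρ)
          · obtain ⟨j, hj⟩ := hex
            refine le_trans ?_ (Finset.single_le_sum hnn (Finset.mem_univ j))
            rw [if_pos hj]
          · exfalso
            push Not at hex
            have h2 : (L.map (fun q => Lc (restrict q ρ))).sum ≤ L.length * C := by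
              have := List.sum_le_card_nsmul (L.map (fun q => Lc (restrict q ρ))) C (by
                intro y hy
                obtain ⟨q, hq, rfl⟩ := List.mem_map.mp hy
                obtain ⟨j, rfl⟩ := List.mem_iff_get.mp hq
                exact hex j)
              simpa using this
            have h3 : Lc (restrict f ρ) ≤ B * C :=
              (hL3 ρ).trans (h2.trans (Nat.mul_le_mul_right _ hL1))
            have h4 : (Lc (restrict f ρ) : ℝ) ≤ B * C := by exact_mod_cast h3
            have h5 : (B : ℝ) * C ≤ (1 + 6 * (a / s : ℝ)) * C := by gcongr
            have h6 : (C : ℝ) = 2 ^ (4 ^ d * d + 1) := by rw [hC]; push_cast; rfl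
            rw [h6] at h4 h5
            linarith
        · rw [mul_zero]; exact Finset.sum_nonneg hnn
    _ = ∑ j : Fin L.length, ∑ ρ : Fin M → Option Bool, wt p ρ *
        (if C < Lc (restrict (L.get j) ρ) then 1 else 0) := Finset.sum_comm
    _ ≤ ∑ _j : Fin L.length, 64 * (12 * p * D) ^ d :=
        Finset.sum_le_sum (fun j _ => piece_prob h0 h1 _ (hL2 _ (L.get_mem j)) hD1 hD hd hq)
    _ = L.length * (64 * (12 * p * D) ^ d) := by simp
    _ ≤ _ := by
        refine mul_le_mul_of_nonneg_right (le_trans ?_ hBR) hq0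
        exact_mod_cast hL1

open Classical in
lemma all_shrink {M D d s a k : ℕ} {p : ℝ} (h0 : 0 ≤ p) (h1 : p ≤ 1)
    (f : Fin k → (Fin M → Bool) → Bool)
    (hf : ∀ i, Lc (f i) ≤ a) (hs : 1 ≤ s) (hD1 : 1 ≤ D)
    (hD : 520 * √s < D + 1) (hd : 1 ≤ d) (hq : 12 * p * D ≤ 1 / 2) (T : ℝ)
    (hT : 2 ^ (4 ^ d * d + 1) * (1 + 6 * (a / s : ℝ)) ≤ T) :
    1 - k * ((1 + 6 * (a / s : ℝ)) * (64 * (12 * p * D) ^ d)) ≤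
    ∑ ρ : Fin M → Option Bool, wt p ρ * (if ∀ i, (Lc (restrict (f i) ρ) : ℝ) ≤ T then 1 else 0) := by
  have h2 : ∑ ρ : Fin M → Option Bool, (wt p ρ - ∑ i, wt p ρ *
      (if T < (Lc (restrict (f i) ρ) : ℝ) then 1 else 0)) ≤
      ∑ ρ : Fin M → Option Bool, wt p ρ *
        (if ∀ i, (Lc (restrict (f i) ρ) : ℝ) ≤ T then 1 else 0) := by
    refine Finset.sum_le_sum (fun ρ _ => ?_)
    have hw := wt_nonneg h0 h1 ρ
    have hnn : ∀ i ∈ (Finset.univ : Finset (Fin k)), 0 ≤ wt p ρ *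
        (if T < (Lc (restrict (f i) ρ) : ℝ) then (1:ℝ) else 0) := by
      intro j _; split_ifs <;> simp [hw]
    split_ifs with ha
    · have := Finset.sum_nonneg hnn
      linarith
    · push Not at ha
      obtain ⟨i, hi⟩ := ha
      have := Finset.single_le_sum hnn (Finset.mem_univ i)
      rw [if_pos hi] at this
      linarith
  refine le_trans ?_ h2
  rw [Finset.sum_sub_distrib, wt_sum, Finset.sum_comm]
  have : ∑ i : Fin k, ∑ ρ : Fin M → Option Bool, wt p ρ *
      (if T < (Lc (restrict (f i) ρ) : ℝ) then 1 else 0)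
      ≤ ∑ _i : Fin k, (1 + 6 * (a / s : ℝ)) * (64 * (12 * p * D) ^ d) :=
    Finset.sum_le_sum (fun i _ => one_shrink h0 h1 (f i) (hf i) hs hD1 hD hd hq T hT)
  simp only [Finset.sum_const, Finset.card_univ, Fintype.card_fin, nsmul_eq_mul] at this
  linarith


open Classical in
/-- Lemma 4.6: for constants `0 < α < 2`, `2 < β < 3`, `δ > 0`,
`ε > 0`, for all large `n`, for any `M ≥ 1` and any at most `n^α` functions on
`{0,1}^M` of formula complexity at most `n^β`, with probability at least
`1 - ε` over the random restriction `R_p` with `p = 2 ln(log₂ n)/n`, all of the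
restricted functions have formula complexity at most `n^{β-2+δ}`. -/
theorem random_restriction_shrinkage (α β δ ε : ℝ)
    (hα0 : 0 < α) (hα2 : α < 2) (hβ2 : 2 < β) (hβ3 : β < 3)
    (hδ : 0 < δ) (hε : 0 < ε) :
    ∃ n₀ : ℕ, ∀ n ≥ n₀, ∀ M : ℕ, 1 ≤ M → ∀ (k : ℕ)
      (h : Fin k → (Fin M → Bool) → Bool),
      (k : ℝ) ≤ (n : ℝ) ^ α →
      (∀ i, (Lc (h i) : ℝ) ≤ (n : ℝ) ^ β) →
      1 - ε ≤ ∑ ρ : Fin M → Option Bool,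
          (∏ i : Fin M, rWeight (2 * Real.log (Real.logb 2 n) / n) (ρ i)) *
          (if ∀ i, (Lc (restrict (h i) ρ) : ℝ) ≤ (n : ℝ) ^ (β - 2 + δ) then 1 else 0) := by
  set η : ℝ := min δ 1 / 4 with hη
  have hη0 : 0 < η := by have : 0 < min δ 1 := lt_min hδ one_pos; positivity
  have hη1 : η ≤ 1 / 4 := by have := min_le_right δ 1; linarith
  have hηδ : 4 * η ≤ δ := by have := min_le_left δ 1; linarith
  set d : ℕ := ⌈20 / η⌉₊ with hd
  have hdη : 20 / η ≤ d := Nat.le_ceil _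
  have hd1 : 1 ≤ d := Nat.one_le_iff_ne_zero.mpr (by
    have : 0 < 20 / η := by positivity
    exact (Nat.ceil_pos.mpr this).ne')
  set C : ℝ := 2 ^ (4 ^ d * d + 1) with hC
  have hC0 : 0 < C := by positivity
  have t1 : Filter.Tendsto (fun n : ℕ => (n : ℝ)) Filter.atTop Filter.atTop :=
    tendsto_natCast_atTop_atTop
  have E1 : ∀ᶠ n : ℕ in Filter.atTop, 2 ≤ n := Filter.eventually_ge_atTop 2
  have E2 : ∀ᶠ n : ℕ in Filter.atTop, (2:ℝ) ≤ (n:ℝ) ^ (η / 2) :=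
    ((tendsto_rpow_atTop (by positivity : 0 < η / 2)).comp t1).eventually_ge_atTop 2
  have E3 : ∀ᶠ n : ℕ in Filter.atTop, 13 * C ≤ (n:ℝ) ^ (δ - 2 * η) :=
    ((tendsto_rpow_atTop (by linarith : 0 < δ - 2 * η)).comp t1).eventually_ge_atTop _
  have E4 : ∀ᶠ n : ℕ in Filter.atTop, 448 / ε ≤ (n:ℝ) := t1.eventually_ge_atTop _
  have E5 : ∀ᶠ n : ℕ in Filter.atTop, 24960 * Real.log n ≤ (n:ℝ) ^ (η / 2) := by
    have h := (isLittleO_log_rpow_atTop (by positivity : 0 < η / 2)).bound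
      (show (0:ℝ) < 1 / 24960 by norm_num)
    filter_upwards [t1.eventually h, E1] with n hn h2
    have hpos : (0:ℝ) ≤ (n:ℝ) ^ (η / 2) := by positivity
    rw [Real.norm_eq_abs, Real.norm_eq_abs, abs_of_nonneg hpos] at hn
    have := le_abs_self (Real.log n)
    linarith
  obtain ⟨n₀, hn₀⟩ := Filter.eventually_atTop.mp (E1.and (E2.and (E3.and (E4.and E5))))
  refine ⟨n₀, fun n hn M _ k h hk hh => ?_⟩
  obtain ⟨e1, e2, e3, e4, e5⟩ := hn₀ n hn
  set N : ℝ := (n : ℝ) with hN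
  have hN2 : (2:ℝ) ≤ N := by rw [hN]; exact_mod_cast e1
  have hN1 : (1:ℝ) ≤ N := by linarith
  have hN0 : (0:ℝ) < N := by linarith
  set LL : ℝ := Real.log (Real.logb 2 N) with hLL
  have hlogb : 1 ≤ Real.logb 2 N := by
    rw [Real.le_logb_iff_rpow_le (by norm_num) hN0]; simpa using hN2
  have hLL0 : 0 ≤ LL := Real.log_nonneg hlogb
  have hlogN : 0 ≤ Real.log N := Real.log_nonneg hN1
  have hLL1 : LL ≤ 2 * Real.log N := by
    have h1 : LL ≤ Real.logb 2 N - 1 := Real.log_le_sub_one_of_pos (by linarith)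
    have h2 : Real.logb 2 N ≤ 2 * Real.log N := by
      unfold Real.logb
      have := Real.log_two_gt_d9
      rw [div_le_iff₀ (by linarith)]
      nlinarith
    linarith
  have hLL2 : 12480 * LL ≤ N ^ (η / 2) := by linarith
  set p : ℝ := 2 * LL / N with hp
  have hp0 : 0 ≤ p := by positivity
  have hp1 : p ≤ 1 := by
    rw [hp, div_le_one hN0]
    have : N ^ (η / 2) ≤ N ^ (1:ℝ) := Real.rpow_le_rpow_of_exponent_le hN1 (by linarith)
    rw [Real.rpow_one] at this
    linarith
  set X : ℝ := N ^ (2 - 2 * η) with hX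
  have hX1 : 1 ≤ X := Real.one_le_rpow hN1 (by linarith)
  set s : ℕ := ⌊X⌋₊ with hs
  have hs1 : 1 ≤ s := Nat.le_floor (by exact_mod_cast hX1)
  have hs1R : (1:ℝ) ≤ s := by exact_mod_cast hs1
  have hsX : (s:ℝ) ≤ X := Nat.floor_le (by linarith)
  have hXs : X ≤ 2 * s := by have := Nat.lt_floor_add_one X; linarith
  set D : ℕ := ⌊520 * √(s:ℝ)⌋₊ with hD
  have hsq1 : 1 ≤ √(s:ℝ) := Real.one_le_sqrt.mpr hs1R
  have hD1 : 1 ≤ D := Nat.le_floor (by push_cast; linarith)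
  have hD2 : 520 * √(s:ℝ) < D + 1 := Nat.lt_floor_add_one _
  have hsqX : √(s:ℝ) ≤ N ^ (1 - η) := by
    rw [Real.sqrt_le_left (by positivity), ← Real.rpow_natCast, ← Real.rpow_mul hN0.le]
    refine hsX.trans (le_of_eq ?_)
    rw [hX]; congr 1; push_cast; ring
  have hD3 : (D:ℝ) ≤ 520 * N ^ (1 - η) := by
    have : (D:ℝ) ≤ 520 * √(s:ℝ) := Nat.floor_le (by positivity)
    linarith
  have hq : 12 * p * D ≤ N ^ (-(η / 2)) := by
    calc 12 * p * D ≤ 12 * p * (520 * N ^ (1 - η)) := by gcongr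
      _ = (12480 * LL) * (N ^ (1 - η) / N) := by rw [hp]; ring
      _ = (12480 * LL) * N ^ (-η) := by
          congr 1
          rw [show -η = (1 - η) - 1 by ring, Real.rpow_sub_one hN0.ne']
      _ ≤ N ^ (η / 2) * N ^ (-η) := by gcongr
      _ = N ^ (-(η / 2)) := by rw [← Real.rpow_add hN0]; congr 1; ring
  have hq2 : 12 * p * D ≤ 1 / 2 := by
    refine hq.trans ?_
    rw [Real.rpow_neg hN0.le, one_div]
    exact inv_anti₀ (by norm_num) e2
  have hqd : (12 * p * D) ^ d ≤ N ^ (-10 : ℝ) := by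
    calc (12 * p * D) ^ d ≤ (N ^ (-(η / 2))) ^ d := by gcongr
      _ = N ^ (-(η / 2) * d) := by rw [← Real.rpow_natCast, ← Real.rpow_mul hN0.le]
      _ ≤ N ^ (-10 : ℝ) := by
          refine Real.rpow_le_rpow_of_exponent_le hN1 ?_
          rw [div_le_iff₀ hη0] at hdη
          linarith
  set a : ℕ := ⌊N ^ β⌋₊ with ha
  have haR : (a:ℝ) ≤ N ^ β := Nat.floor_le (by positivity)
  have hf : ∀ i, Lc (h i) ≤ a := fun i => Nat.le_floor (hh i)
  have has : (a / s : ℝ) ≤ 2 * N ^ (β - 2 + 2 * η) := by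
    rw [div_le_iff₀ (by linarith)]
    calc (a:ℝ) ≤ N ^ β := haR
      _ = N ^ (β - 2 + 2 * η) * X := by rw [hX, ← Real.rpow_add hN0]; congr 1; ring
      _ ≤ N ^ (β - 2 + 2 * η) * (2 * s) := by gcongr
      _ = _ := by ring
  have hT : C * (1 + 6 * (a / s : ℝ)) ≤ N ^ (β - 2 + δ) := by
    have h1 : 1 ≤ N ^ (β - 2 + 2 * η) := Real.one_le_rpow hN1 (by linarith)
    calc C * (1 + 6 * (a / s : ℝ)) ≤ C * (13 * N ^ (β - 2 + 2 * η)) := by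
          gcongr; linarith
      _ = (13 * C) * N ^ (β - 2 + 2 * η) := by ring
      _ ≤ N ^ (δ - 2 * η) * N ^ (β - 2 + 2 * η) := by gcongr
      _ = _ := by rw [← Real.rpow_add hN0]; congr 1; ring
  have hmain := all_shrink hp0 hp1 h hf hs1 hD1 hD2 hd1 hq2 (N ^ (β - 2 + δ)) hT
  refine le_trans ?_ hmain
  have hbound : k * ((1 + 6 * (a / s : ℝ)) * (64 * (12 * p * D) ^ d)) ≤ ε := by
    have hk2 : (k:ℝ) ≤ N ^ (2:ℝ) := hk.trans (Real.rpow_le_rpow_of_exponent_le hN1 hα2.le)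
    have h3 : (a / s : ℝ) ≤ N ^ (3:ℝ) := by
      refine (div_le_self (by positivity) hs1R).trans (haR.trans ?_)
      exact Real.rpow_le_rpow_of_exponent_le hN1 hβ3.le
    have h31 : 1 ≤ N ^ (3:ℝ) := Real.one_le_rpow hN1 (by norm_num)
    have hqd0 : 0 ≤ (12 * p * D) ^ d := by positivity
    calc k * ((1 + 6 * (a / s : ℝ)) * (64 * (12 * p * D) ^ d))
        ≤ N ^ (2:ℝ) * ((7 * N ^ (3:ℝ)) * (64 * N ^ (-10:ℝ))) := by
          gcongr; linarith
      _ = 448 * N ^ (-5 : ℝ) := by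
          rw [show (-5:ℝ) = 2 + (3 + -10) by norm_num, Real.rpow_add hN0, Real.rpow_add hN0]; ring
      _ ≤ 448 * N ^ (-1 : ℝ) := by
          have := Real.rpow_le_rpow_of_exponent_le hN1 (show (-5:ℝ) ≤ -1 by norm_num)
          linarith
      _ ≤ ε := by
          rw [Real.rpow_neg_one, ← div_eq_mul_inv, div_le_iff₀ hN0]
          rw [div_le_iff₀ hε] at e4
          linarith
  linarith
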